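/- arXiv:1611.05482 — 4 statements merged into one kernel-verified Lean document; each statement's English description precedes it below -/
import Mathlib

section
/- The prefixes w_n of the generalized pseudostandard word u_p = u(1^ω, (EERR)^ω) satisfy, for all k ∈ ℕ (with w_z = ε for z ≤ 0): w_{4k+1} = w_{4k}·10·E(w_{4k}), w_{4k+2} = w_{4k+1}·w_{4k−2}^{−1}·w_{4k+1}, w_{4k+3} = w_{4k+2}·(010)^{−1}·R(w_{4k+2}), and w_{4k+4} = w_{4k+3}·w_{4k}^{−1}·w_{4k+3}. -/
abbrev Word := List Bool

/-- The exchange antimorphism `E`: complement each letter and reverse. -/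
def Ebar (w : Word) : Word := (w.map Bool.not).reverse

def IsPal (w : Word) : Prop := w.reverse = w
def IsEPal (w : Word) : Prop := Ebar w = w

open Classical in
lemma exists_minLength {Q : Word → Prop} (hex : ∃ v, Q v) :
    ∃ v, Q v ∧ ∀ v', Q v' → v.length ≤ v'.length := by
  classical
  have h : ∃ n, ∃ v, Q v ∧ v.length = n := ⟨_, hex.choose, hex.choose_spec, rfl⟩
  obtain ⟨v, hv, hlen⟩ := Nat.find_spec h
  exact ⟨v, hv, fun v' hv' => by
    rw [hlen]; exact Nat.find_min' h ⟨v', hv', rfl⟩⟩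

lemma pal_ext (w : Word) : ∃ v, w <+: v ∧ IsPal v :=
  ⟨w ++ w.reverse, List.prefix_append _ _, by simp [IsPal]⟩

lemma epal_ext (w : Word) : ∃ v, w <+: v ∧ IsEPal v :=
  ⟨w ++ Ebar w, List.prefix_append _ _, by
    simp [IsEPal, Ebar, List.map_reverse, List.map_map, Function.comp_def, Bool.not_not]⟩

/-- The palindromic closure: the shortest palindrome having `w` as a prefix. -/
noncomputable def palCl (w : Word) : Word := (exists_minLength (pal_ext w)).choose

/-- The pseudopalindromic closure: the shortest `E`-palindrome having `w` as a prefix. -/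
noncomputable def epalCl (w : Word) : Word := (exists_minLength (epal_ext w)).choose

/-- Prefixes of the generalized pseudostandard word `u(1^ω, (EERR)^ω)`
(the letter `1` is `true`). -/
noncomputable def wp : ℕ → Word
  | 0 => []
  | n+1 => if (n+1) % 4 = 1 ∨ (n+1) % 4 = 2
           then epalCl (wp n ++ [true])
           else palCl (wp n ++ [true])

/-- Factors of `u_p`. -/
def FactorUp (v : Word) : Prop := ∃ n, v <:+: wp n

/-- Factor complexity of `u_p`. -/
noncomputable def Cp (n : ℕ) : ℕ := Set.ncard {v : Word | FactorUp v ∧ v.length = n}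

/-!
Write `θ_n` for the antimorphism (`E` or `R`) used to form `w_n`. Let `w = w_n`, `ψ = θ_n` and
`θ = θ_{n+1}`, so that `w` is a `ψ`-palindrome. The `θ`-closure of `w1` is governed by the longest
`θ`-palindromic suffix of `w1`, which `ψ` reflects to a `θ`-palindromic prefix `u` of `w` followed
by the letter `ψθ(1)`. If `u` is the longest such prefix, then the closure has length `2|w| - |u|`,
so that it overlaps `w` with `θ(w)` along `ψ(u)`; if there is none and `θ = E`, then the closure is
`w · 10 · E(w)`.

It remains to know the pseudopalindromic prefixes of `u_p` and the letters after them: apart from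
the `E`-palindrome `ε`, followed by `1`, and the palindromes `1` and `101`, followed by `0`, they
are exactly the `w_n`, followed by `1`. This is an induction on `n`. By minimality of the closure,
an unwanted prefix `v` of `w_{n+1}` longer than `w_n` has type opposite to `θ_{n+1}`. If
`|v| + |w_n| ≥ |w_{n+1}|`, reflecting `w_n` through `v` and `w_{n+1}` yields a pseudopalindromic
prefix of length `|v| + |w_n| - |w_{n+1}|` followed by `0`, that is `1` or `101`, and the lengths
rule this out. The only other case is `n = 4k`, `|v| = |w_n| + 1`, where `w_n` would be constant.
-/

section PalPrefix

/-- The prefix of length `n` of the infinite word `x`. -/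
def prefixWord (x : ℕ → Bool) (n : ℕ) : Word := (List.range n).map x

/-- `θ`-palindromes, where `θ = true` encodes the antimorphism `E` and `θ = false` encodes `R`.
With this encoding `θ` acts on letters as `xor θ`, and composition of antimorphisms
is `xor`. -/
def IsThetaPal (θ : Bool) (w : Word) : Prop := w.reverse = w.map (xor θ)

/-- The prefix of length `n` of the infinite word `x` is a `θ`-palindrome, with `θ` encoded as in
`IsThetaPal`. -/
def PalPrefix (θ : Bool) (x : ℕ → Bool) (n : ℕ) : Prop :=
  ∀ i j, i + j + 1 = n → x i = (θ ^^ x j)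

@[simp]
lemma length_prefixWord (x : ℕ → Bool) (n : ℕ) : (prefixWord x n).length = n := by
  simp [prefixWord]

@[simp]
lemma getElem_prefixWord (x : ℕ → Bool) (n i : ℕ) (hi : i < (prefixWord x n).length) :
    (prefixWord x n)[i] = x i := by
  simp [prefixWord]

lemma prefixWord_succ (x : ℕ → Bool) (n : ℕ) : prefixWord x (n + 1) = prefixWord x n ++ [x n] := by
  simp [prefixWord, List.range_succ]

lemma isThetaPal_true (w : Word) : IsThetaPal true w ↔ IsEPal w := by
  have h : xor true = Bool.not := by ext; simp
  rw [IsThetaPal, IsEPal, Ebar, h, List.reverse_eq_iff, eq_comm]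

lemma map_xor_false (w : Word) : w.map (xor false) = w := by
  simp [show xor false = id by ext; simp]

lemma isThetaPal_false (w : Word) : IsThetaPal false w ↔ IsPal w := by
  rw [IsThetaPal, IsPal, map_xor_false]

lemma isThetaPal_prefixWord (θ : Bool) (x : ℕ → Bool) (n : ℕ) :
    IsThetaPal θ (prefixWord x n) ↔ PalPrefix θ x n := by
  constructor
  · intro h i j hij
    have hlen : j < (prefixWord x n).reverse.length := by simp; omega
    have hj := List.getElem_of_eq h hlen
    simp only [List.getElem_reverse, List.getElem_map, getElem_prefixWord,
      length_prefixWord] at hj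
    rwa [show n - 1 - j = i by omega] at hj
  · refine fun h ↦ List.ext_getElem (by simp) fun j hj _ ↦ ?_
    simp only [List.length_reverse, length_prefixWord] at hj
    simpa using h (n - 1 - j) j (by omega)

namespace PalPrefix

variable {θ ψ φ : Bool} {x : ℕ → Bool} {l m n q : ℕ}

lemma even (h : PalPrefix true x n) : Even n := by
  by_contra hn
  obtain ⟨i, rfl⟩ := Nat.not_even_iff_odd.1 hn
  simpa using h i i (by omega)

lemma type_unique (hn : 0 < n) (h : PalPrefix θ x n) (h' : PalPrefix ψ x n) : θ = ψ := by
  have h₁ := h 0 (n - 1) (by omega)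
  rw [h' 0 (n - 1) (by omega)] at h₁
  exact (Bool.xor_left_inj.1 h₁).symm

-- The composition of the reflections of the two prefixes is a translation by `n - m`.
lemma apply_translate (hm : PalPrefix θ x m) (hn : PalPrefix ψ x n) {i j : ℕ}
    (hij : j + m = i + n) (hi : i < m) : x j = (ψ ^^ θ ^^ x i) := by
  rw [hn j (m - 1 - i) (by omega), hm (m - 1 - i) i (by omega), Bool.xor_assoc]

lemma compose (hl : PalPrefix θ x l) (hm : PalPrefix ψ x m) (hn : PalPrefix φ x n)
    (hml : m ≤ l) (hnl : n ≤ l) (hq : q + l = m + n) : PalPrefix (θ ^^ ψ ^^ φ) x q := by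
  intro i j hij
  rw [hn i (n - 1 - i) (by omega), hl (n - 1 - i) (l - n + i) (by omega),
    hm (l - n + i) j (by omega)]
  cases θ <;> cases ψ <;> simp

lemma prefixWord_eq_append (hm : PalPrefix θ x m) (hn : PalPrefix ψ x n) (hlen : l + m = n) :
    prefixWord x n = prefixWord x l ++ (prefixWord x m).map (xor (ψ ^^ θ)) := by
  subst hlen
  simp only [prefixWord, List.range_add, List.map_append, List.map_map, List.append_cancel_left_eq]
  refine List.map_congr_left fun i hi ↦ ?_
  exact hm.apply_translate hn (j := l + i) (by omega) (List.mem_range.1 hi)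

lemma exists_overlap (hl : PalPrefix θ x l) (hm : PalPrefix ψ x m) (hn : PalPrefix θ x n)
    (hmn : m ≤ n) (hlen : n + l = 2 * m) :
    ∃ z, prefixWord x m = z ++ (prefixWord x l).map (xor (ψ ^^ θ)) ∧
      prefixWord x n = z ++ (prefixWord x m).map (xor (θ ^^ ψ)) :=
  ⟨prefixWord x (n - m), hl.prefixWord_eq_append hm (by omega),
    hm.prefixWord_eq_append hn (by omega)⟩

end PalPrefix

/-- The number `n` is the length of the `θ`-palindromic closure of the prefix of length `m + 1` of
`x`, and this closure is again a prefix of `x`. The words competing with the closure are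
themselves presented as prefixes of infinite words `y`. -/
structure IsClosureLength (θ : Bool) (x : ℕ → Bool) (m n : ℕ) : Prop where
  lt : m < n
  palPrefix : PalPrefix θ x n
  le_of_palPrefix : ∀ y l, (∀ i ≤ m, y i = x i) → m < l → PalPrefix θ y l → n ≤ l

namespace IsClosureLength

variable {θ ψ φ : Bool} {x : ℕ → Bool} {l m n q u v : ℕ}

lemma le_of_palPrefix_self (h : IsClosureLength θ x m n) (hl : m < l) (hx : PalPrefix θ x l) :
    n ≤ l :=
  h.le_of_palPrefix x l (fun _ _ ↦ rfl) hl hx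

lemma le_of_symmetric (h : IsClosureLength θ x m n) (hml : m < l) (hlm : l ≤ 2 * m + 2)
    (hx : ∀ i j, i ≤ m → j ≤ m → i + j + 1 = l → x i = (θ ^^ x j)) : n ≤ l := by
  refine h.le_of_palPrefix (fun i ↦ if i ≤ m then x i else θ ^^ x (l - 1 - i)) l
    (fun i hi ↦ if_pos hi) hml fun i j hij ↦ ?_
  rcases le_or_gt i m with hi | hi <;> rcases le_or_gt j m with hj | hj
  · simp only [if_pos hi, if_pos hj, hx i j hi hj hij]
  · simp only [if_pos hi, if_neg hj.not_ge, show l - 1 - j = i by omega,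
      ← Bool.xor_assoc, Bool.xor_self, Bool.false_xor]
  · simp only [if_neg hi.not_ge, if_pos hj, show l - 1 - i = j by omega]
  · omega

lemma le_two_mul (h : IsClosureLength θ x m n) : n ≤ 2 * m + 2 :=
  h.le_of_symmetric (by omega) le_rfl fun i j hi hj hij ↦ by omega

lemma reflect (h : IsClosureLength θ x m n) (hm : PalPrefix ψ x m) (hv : PalPrefix φ x v)
    (hvn : v ≤ n) (hq : q + n = v + m) :
    PalPrefix (θ ^^ φ ^^ ψ) x q ∧ x q = (θ ^^ φ ^^ x m) := by
  have hmn := h.lt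
  refine ⟨h.palPrefix.compose hv hm hvn hmn.le hq, ?_⟩
  rw [hv.apply_translate h.palPrefix (i := q) (j := m) (by omega) (by omega)]
  cases θ <;> cases φ <;> simp

theorem add_eq_two_mul (h : IsClosureLength θ x m n) (hm : PalPrefix ψ x m)
    (hu : PalPrefix θ x u) (hum : u < m) (hxu : x u = (θ ^^ ψ ^^ x m))
    (hmax : ∀ v < m, PalPrefix θ x v → x v = (θ ^^ ψ ^^ x m) → v ≤ u) : n + u = 2 * m := by
  have hmn := h.lt
  have hge : 2 * m ≤ n + u := by
    by_contra! hlt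
    obtain ⟨hpal, hletter⟩ := h.reflect hm hm hmn.le (q := 2 * m - n) (by omega)
    rw [Bool.xor_assoc, Bool.xor_self, Bool.xor_false] at hpal
    have := hmax _ (by omega) hpal hletter
    omega
  have hle : n ≤ 2 * m - u := by
    refine h.le_of_symmetric (by omega) (by omega) fun i j hi hj hij ↦ ?_
    rcases hi.eq_or_lt with rfl | hi
    · rw [hm j u (by omega), hxu]
      cases θ <;> cases ψ <;> simp
    rcases hj.eq_or_lt with rfl | hj
    · rw [hm i u (by omega), hxu]
      cases θ <;> cases ψ <;> simp
    rw [hm i (m - 1 - i) (by omega), hu (m - 1 - i) (m - 1 - j) (by omega),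
      hm (m - 1 - j) j (by omega)]
    cases θ <;> cases ψ <;> simp
  omega

theorem eq_two_mul_add_two (h : IsClosureLength true x m n) (hm : PalPrefix ψ x m)
    (hnone : ∀ v < m, PalPrefix true x v → x v ≠ (true ^^ ψ ^^ x m)) : n = 2 * m + 2 := by
  have hmn := h.lt
  have heven := h.palPrefix.even
  have hle := h.le_two_mul
  have hlt : 2 * m < n := by
    by_contra! hge
    obtain ⟨hpal, hletter⟩ := h.reflect hm hm hmn.le (q := 2 * m - n) (by omega)
    rw [Bool.xor_assoc, Bool.xor_self, Bool.xor_false] at hpal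
    exact hnone _ (by omega) hpal hletter
  grind

end IsClosureLength

end PalPrefix

section Prefixes

/-- The antimorphism of which `w_n` is a pseudopalindrome, encoded as in `IsThetaPal`. For `n > 0`
it is the `n`-th letter of `(EERR)^ω`. -/
def wpType (n : ℕ) : Bool := n % 4 = 1 ∨ n % 4 = 2

/-- The length of `w_n`. -/
noncomputable def wpLen (n : ℕ) : ℕ := (wp n).length

/-- The infinite word `u_p`, the limit of the `w_n`; its `i`-th letter is read off from `w_{i+1}`,
which has length greater than `i`. -/
noncomputable def upWord (i : ℕ) : Bool := (wp (i + 1)).getD i false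

lemma wp_succ_spec (n : ℕ) :
    wp n ++ [true] <+: wp (n + 1) ∧ IsThetaPal (wpType (n + 1)) (wp (n + 1)) ∧
      ∀ v, wp n ++ [true] <+: v → IsThetaPal (wpType (n + 1)) v → wpLen (n + 1) ≤ v.length := by
  by_cases htype : (n + 1) % 4 = 1 ∨ (n + 1) % 4 = 2
  · have spec := (exists_minLength (epal_ext (wp n ++ [true]))).choose_spec
    rw [wpLen, wp, if_pos htype, wpType, decide_eq_true htype]
    simp only [isThetaPal_true]
    exact ⟨spec.1.1, spec.1.2, fun v hv hpal ↦ spec.2 v ⟨hv, hpal⟩⟩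
  · have spec := (exists_minLength (pal_ext (wp n ++ [true]))).choose_spec
    rw [wpLen, wp, if_neg htype, wpType, decide_eq_false htype]
    simp only [isThetaPal_false]
    exact ⟨spec.1.1, spec.1.2, fun v hv hpal ↦ spec.2 v ⟨hv, hpal⟩⟩

lemma wp_isPrefix_of_le {m n : ℕ} (h : m ≤ n) : wp m <+: wp n := by
  induction n, h using Nat.le_induction with
  | base => exact List.prefix_rfl
  | succ n _ ih => exact ih.trans ((List.prefix_append _ _).trans (wp_succ_spec n).1)

@[simp]
lemma wpLen_zero : wpLen 0 = 0 := by simp [wpLen, wp]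

lemma wpLen_strictMono : StrictMono wpLen :=
  strictMono_nat_of_lt_succ fun n ↦ by simpa [wpLen] using (wp_succ_spec n).1.length_le

lemma wp_eq_prefixWord (n : ℕ) : wp n = prefixWord upWord (wpLen n) := by
  refine List.ext_getElem (by simp [wpLen]) fun i hi _ ↦ ?_
  have hi' : i < (wp (i + 1)).length := wpLen_strictMono.le_apply
  rw [getElem_prefixWord, upWord, List.getD_eq_getElem _ _ hi']
  rcases le_total n (i + 1) with hn | hn
  · exact (wp_isPrefix_of_le hn).getElem hi
  · exact ((wp_isPrefix_of_le hn).getElem hi').symm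

lemma palPrefix_wpLen (n : ℕ) : PalPrefix (wpType n) upWord (wpLen n) := by
  rw [← isThetaPal_prefixWord, ← wp_eq_prefixWord]
  cases n with
  | zero => simp [IsThetaPal, wp]
  | succ n => exact (wp_succ_spec n).2.1

@[simp]
lemma upWord_wpLen (n : ℕ) : upWord (wpLen n) = true := by
  have hpre := (wp_succ_spec n).1
  have hlen : wpLen n < (wp n ++ [true]).length := by simp [wpLen]
  have h := hpre.getElem hlen
  simp only [wp_eq_prefixWord (n + 1), getElem_prefixWord] at h
  simpa [wpLen] using h.symm

@[simp]
lemma upWord_zero : upWord 0 = true := by simpa using upWord_wpLen 0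

lemma isClosureLength_wpLen (n : ℕ) :
    IsClosureLength (wpType (n + 1)) upWord (wpLen n) (wpLen (n + 1)) where
  lt := wpLen_strictMono n.lt_succ_self
  palPrefix := palPrefix_wpLen (n + 1)
  le_of_palPrefix y l hy hl hpal := by
    have hstart : wp n ++ [true] = prefixWord y (wpLen n + 1) := by
      rw [wp_eq_prefixWord, ← upWord_wpLen n, ← prefixWord_succ]
      exact List.map_congr_left fun i hi ↦ (hy i (Nat.lt_succ_iff.1 (List.mem_range.1 hi))).symm
    have hpre : wp n ++ [true] <+: prefixWord y l := by
      rw [hstart, ← Nat.add_sub_cancel' (Nat.succ_le_of_lt hl)]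
      simp [prefixWord, List.range_add]
    simpa using (wp_succ_spec n).2.2 _ hpre ((isThetaPal_prefixWord _ _ _).2 hpal)

end Prefixes

section Classification

@[simp]
lemma wpType_four_mul (k : ℕ) : wpType (4 * k) = false := by simp [wpType]

@[simp]
lemma wpType_four_mul_add_one (k : ℕ) : wpType (4 * k + 1) = true := by simp [wpType]

@[simp]
lemma wpType_four_mul_add_two (k : ℕ) : wpType (4 * k + 2) = true := by simp [wpType]

@[simp]
lemma wpType_four_mul_add_three (k : ℕ) : wpType (4 * k + 3) = false := by simp [wpType]

lemma palPrefix_wpLen_four_mul_sub_two (k : ℕ) : PalPrefix true upWord (wpLen (4 * k - 2)) := by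
  cases k with
  | zero => simp [PalPrefix]
  | succ k => exact wpType_four_mul_add_two k ▸ palPrefix_wpLen (4 * k + 2)

lemma wpLen_one : wpLen 1 = 2 := by
  simpa using (isClosureLength_wpLen 0).eq_two_mul_add_two (palPrefix_wpLen 0) (by simp)

lemma wpLen_two : wpLen 2 = 4 := by
  have h := (isClosureLength_wpLen 1).add_eq_two_mul (palPrefix_wpLen 1)
    (palPrefix_wpLen_four_mul_sub_two 0) (by simp [wpLen_one]) (by simp [wpType])
    fun v hv hpal _ ↦ by
      have := PalPrefix.even hpal
      rw [wpLen_one] at hv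
      grind
  simpa [wpLen_one] using h

lemma upWord_one : upWord 1 = false := by
  simpa [wpType] using palPrefix_wpLen 1 1 0 (by simp [wpLen_one])

lemma upWord_two : upWord 2 = true := by
  rw [← wpLen_one, upWord_wpLen]

lemma upWord_three : upWord 3 = false := by
  simpa [wpType] using palPrefix_wpLen 2 3 0 (by simp [wpLen_two])

lemma palPrefix_three : PalPrefix false upWord 3 := by
  intro i j hij
  obtain ⟨rfl, rfl⟩ | ⟨rfl, rfl⟩ | ⟨rfl, rfl⟩ :
      i = 0 ∧ j = 2 ∨ i = 1 ∧ j = 1 ∨ i = 2 ∧ j = 0 := by omega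
  all_goals simp [upWord_two]

lemma four_le_wpLen {n : ℕ} (hn : 2 ≤ n) : 4 ≤ wpLen n :=
  wpLen_two ▸ wpLen_strictMono.monotone hn

/-- The lengths of the pseudopalindromic prefixes of `u_p`, by type, which do not come from a `w_n`:
the empty `E`-palindrome and the palindromes `1` and `101`. -/
def IsSporadic : Bool → ℕ → Prop
  | true, v => v = 0
  | false, v => v = 1 ∨ v = 3

/-- The classification of the pseudopalindromic prefixes of `u_p`, up to length `|w_n|`. -/
def PalPrefixesClassified (n : ℕ) : Prop :=
  ∀ θ, ∀ v ≤ wpLen n, PalPrefix θ upWord v →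
    IsSporadic θ v ∨ ∃ j ≤ n, wpType j = θ ∧ wpLen j = v

namespace PalPrefixesClassified

variable {θ : Bool} {k n r v : ℕ}

lemma of_apply_eq_false (h : PalPrefixesClassified n) (hv : v ≤ wpLen n)
    (hpal : PalPrefix θ upWord v) (hletter : upWord v = false) :
    θ = false ∧ (v = 1 ∨ v = 3) := by
  rcases h θ v hv hpal with hsporadic | ⟨j, -, -, rfl⟩
  · cases θ
    · exact ⟨rfl, hsporadic⟩
    · obtain rfl : v = 0 := hsporadic
      simp at hletter
  · simp at hletter

lemma le_wpLen_of_apply_eq_true (h : PalPrefixesClassified n) (hv : v < wpLen n)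
    (hpal : PalPrefix θ upWord v) (hletter : upWord v = true)
    (hr : ∀ j < n, wpType j = θ → j ≤ r) : v ≤ wpLen r := by
  rcases h θ v hv.le hpal with hsporadic | ⟨j, -, hj, rfl⟩
  · cases θ
    · rcases hsporadic with rfl | rfl
      · simp [upWord_one] at hletter
      · simp [upWord_three] at hletter
    · obtain rfl : v = 0 := hsporadic
      exact Nat.zero_le _
  · exact wpLen_strictMono.monotone (hr j (wpLen_strictMono.lt_iff_lt.1 hv) hj)

lemma wpLen_four_mul_add_one (h : PalPrefixesClassified (4 * k)) :
    wpLen (4 * k + 1) = 2 * wpLen (4 * k) + 2 := by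
  have hclosure := isClosureLength_wpLen (4 * k)
  rw [wpType_four_mul_add_one] at hclosure
  refine hclosure.eq_two_mul_add_two (palPrefix_wpLen (4 * k)) fun v hv hpal hletter ↦ ?_
  simpa using (h.of_apply_eq_false hv.le hpal (by simpa using hletter)).1

lemma wpLen_four_mul_add_two (h : PalPrefixesClassified (4 * k + 1)) :
    wpLen (4 * k + 2) + wpLen (4 * k - 2) = 2 * wpLen (4 * k + 1) := by
  have hclosure := isClosureLength_wpLen (4 * k + 1)
  rw [wpType_four_mul_add_two] at hclosure
  refine hclosure.add_eq_two_mul (palPrefix_wpLen _) (palPrefix_wpLen_four_mul_sub_two k)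
    (wpLen_strictMono (by omega)) (by simp) fun v hv hpal hletter ↦ ?_
  refine h.le_wpLen_of_apply_eq_true hv hpal (by simpa using hletter) fun j hj htype ↦ ?_
  simp only [wpType, decide_eq_true_eq] at htype
  omega

lemma wpLen_four_mul_add_three (h : PalPrefixesClassified (4 * k + 2)) :
    wpLen (4 * k + 3) + 3 = 2 * wpLen (4 * k + 2) := by
  have hclosure := isClosureLength_wpLen (4 * k + 2)
  rw [wpType_four_mul_add_three] at hclosure
  refine hclosure.add_eq_two_mul (palPrefix_wpLen _) palPrefix_three
    (four_le_wpLen (by omega)) (by simp [upWord_three]) fun v hv hpal hletter ↦ ?_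
  have := (h.of_apply_eq_false hv.le hpal (by simpa using hletter)).2
  omega

lemma wpLen_four_mul_add_four (h : PalPrefixesClassified (4 * k + 3)) :
    wpLen (4 * k + 4) + wpLen (4 * k) = 2 * wpLen (4 * k + 3) := by
  have hclosure := isClosureLength_wpLen (4 * k + 3)
  rw [show 4 * k + 3 + 1 = 4 * (k + 1) by ring, wpType_four_mul] at hclosure
  have hpal := palPrefix_wpLen (4 * k)
  rw [wpType_four_mul] at hpal
  refine hclosure.add_eq_two_mul (palPrefix_wpLen _) hpal
    (wpLen_strictMono (by omega)) (by simp) fun v hv hpal hletter ↦ ?_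
  refine h.le_wpLen_of_apply_eq_true hv hpal (by simpa using hletter) fun j hj htype ↦ ?_
  simp only [wpType, decide_eq_false_iff_not] at htype
  omega

lemma succ (h : PalPrefixesClassified n)
    (hnew : ∀ v, wpLen n < v → v < wpLen (n + 1) → PalPrefix (!wpType (n + 1)) upWord v →
      IsSporadic (!wpType (n + 1)) v) : PalPrefixesClassified (n + 1) := by
  intro θ v hv hpal
  rcases le_or_gt v (wpLen n) with hvn | hvn
  · exact (h θ v hvn hpal).imp_right fun ⟨j, hj, hj'⟩ ↦ ⟨j, by omega, hj'⟩
  have hclosure := isClosureLength_wpLen n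
  rcases hv.eq_or_lt with rfl | hv
  · exact .inr ⟨n + 1, le_rfl, hclosure.palPrefix.type_unique (by omega) hpal, rfl⟩
  have htype : θ = !wpType (n + 1) := by
    refine Bool.eq_not.2 ?_
    rintro rfl
    exact hv.not_ge (hclosure.le_of_palPrefix_self hvn hpal)
  subst htype
  exact .inl (hnew v hvn hv hpal)

lemma reflect_opposite (h : PalPrefixesClassified n) (hv : v < wpLen (n + 1))
    (hpal : PalPrefix (!wpType (n + 1)) upWord v) (hlen : wpLen (n + 1) ≤ v + wpLen n) :
    wpType n = true ∧ (v + wpLen n = wpLen (n + 1) + 1 ∨ v + wpLen n = wpLen (n + 1) + 3) := by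
  obtain ⟨hq, hletter⟩ := (isClosureLength_wpLen n).reflect (palPrefix_wpLen n) hpal hv.le
    (q := v + wpLen n - wpLen (n + 1)) (by omega)
  obtain ⟨htype, hq'⟩ := h.of_apply_eq_false (by omega) hq (by simpa using hletter)
  exact ⟨by simpa using htype, by omega⟩

lemma four_mul_add_one (h : PalPrefixesClassified (4 * k)) :
    PalPrefixesClassified (4 * k + 1) := by
  refine h.succ fun v hv hv' hpal ↦ ?_
  have hlen := h.wpLen_four_mul_add_one
  rcases le_or_gt (wpLen (4 * k + 1)) (v + wpLen (4 * k)) with hle | hgt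
  · simpa using (h.reflect_opposite hv' hpal hle).1
  obtain rfl : v = wpLen (4 * k) + 1 := by omega
  rw [wpType_four_mul_add_one] at hpal ⊢
  rcases k.eq_zero_or_pos with rfl | hk
  · simp [IsSporadic]
  -- The translation by `1` would give all letters of `w_{4k}` the same value.
  have htranslate := (palPrefix_wpLen (4 * k)).apply_translate hpal (i := 0) (j := 1)
    (by omega) (by have := four_le_wpLen (n := 4 * k); omega)
  simp [upWord_one] at htranslate

lemma four_mul_add_two (h : PalPrefixesClassified (4 * k + 1)) :
    PalPrefixesClassified (4 * k + 2) := by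
  refine h.succ fun v hv hv' hpal ↦ ?_
  have hlen : wpLen (4 * k + 1 + 1) + _ = _ := h.wpLen_four_mul_add_two
  have hv_eq := (h.reflect_opposite hv' hpal (by omega)).2
  rcases k.eq_zero_or_pos with rfl | hk
  · have hone : wpLen (4 * 0 + 1) = 2 := wpLen_one
    have htwo : wpLen (4 * 0 + 1 + 1) = 4 := wpLen_two
    exact .inr (by omega)
  · have := four_le_wpLen (n := 4 * k - 2) (by omega)
    omega

lemma four_mul_add_three (h : PalPrefixesClassified (4 * k + 2)) :
    PalPrefixesClassified (4 * k + 3) := by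
  refine h.succ fun v hv hv' hpal ↦ ?_
  have hlen : wpLen (4 * k + 2 + 1) + _ = _ := h.wpLen_four_mul_add_three
  have hv_eq := (h.reflect_opposite hv' hpal (by omega)).2
  omega

lemma four_mul_add_four (h : PalPrefixesClassified (4 * k + 3)) :
    PalPrefixesClassified (4 * k + 4) := by
  refine h.succ fun v hv hv' hpal ↦ ?_
  have hlen : wpLen (4 * k + 3 + 1) + _ = _ := h.wpLen_four_mul_add_four
  simpa using (h.reflect_opposite hv' hpal (by omega)).1

end PalPrefixesClassified

theorem palPrefixesClassified_four_mul (k : ℕ) : PalPrefixesClassified (4 * k) := by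
  induction k with
  | zero =>
    intro θ v hv _
    obtain rfl : v = 0 := by simpa using hv
    cases θ
    · exact .inr ⟨0, le_rfl, by simp [wpType], wpLen_zero⟩
    · exact .inl rfl
  | succ k ih =>
    exact ih.four_mul_add_one.four_mul_add_two.four_mul_add_three.four_mul_add_four

end Classification

section Recurrences

variable {k : ℕ}

lemma reverse_wp (n : ℕ) : (wp n).reverse = (wp n).map (xor (wpType n)) := by
  rw [wp_eq_prefixWord]
  exact (isThetaPal_prefixWord _ _ _).2 (palPrefix_wpLen n)

lemma wp_four_mul_add_one (hlen : wpLen (4 * k + 1) = 2 * wpLen (4 * k) + 2) :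
    wp (4 * k + 1) = wp (4 * k) ++ [true, false] ++ Ebar (wp (4 * k)) := by
  have hpal := palPrefix_wpLen (4 * k + 1)
  have hletter : upWord (wpLen (4 * k) + 1) = false := by
    rw [hpal _ (wpLen (4 * k)) (by omega)]
    simp
  have hborder := (palPrefix_wpLen (4 * k)).prefixWord_eq_append hpal
    (l := wpLen (4 * k) + 1 + 1) (by omega)
  rw [prefixWord_succ, prefixWord_succ, upWord_wpLen, hletter] at hborder
  simp only [← wp_eq_prefixWord] at hborder
  have hE : Ebar (wp (4 * k)) = (wp (4 * k)).map not := by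
    rw [Ebar, ← List.map_reverse, reverse_wp]
    simp
  rw [hborder, hE]
  simp

lemma exists_wp_four_mul_add_two
    (hlen : wpLen (4 * k + 2) + wpLen (4 * k - 2) = 2 * wpLen (4 * k + 1)) :
    ∃ z, wp (4 * k + 1) = z ++ wp (4 * k - 2) ∧ wp (4 * k + 2) = z ++ wp (4 * k + 1) := by
  have hpal := palPrefix_wpLen (4 * k + 2)
  rw [wpType_four_mul_add_two] at hpal
  simpa [← wp_eq_prefixWord, map_xor_false] using
    (palPrefix_wpLen_four_mul_sub_two k).exists_overlap (palPrefix_wpLen (4 * k + 1)) hpal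
      (wpLen_strictMono.monotone (by omega)) hlen

lemma exists_wp_four_mul_add_three (hlen : wpLen (4 * k + 3) + 3 = 2 * wpLen (4 * k + 2)) :
    ∃ z, wp (4 * k + 2) = z ++ [false, true, false] ∧
      wp (4 * k + 3) = z ++ (wp (4 * k + 2)).reverse := by
  have hpal := palPrefix_wpLen (4 * k + 3)
  rw [wpType_four_mul_add_three] at hpal
  have h101 : prefixWord upWord 3 = [true, false, true] := by
    simp [prefixWord, List.range_succ, upWord_one, upWord_two]
  simpa [← wp_eq_prefixWord, h101, reverse_wp] using palPrefix_three.exists_overlap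
    (palPrefix_wpLen (4 * k + 2)) hpal (wpLen_strictMono.monotone (by omega)) hlen

lemma exists_wp_four_mul_add_four
    (hlen : wpLen (4 * k + 4) + wpLen (4 * k) = 2 * wpLen (4 * k + 3)) :
    ∃ z, wp (4 * k + 3) = z ++ wp (4 * k) ∧ wp (4 * k + 4) = z ++ wp (4 * k + 3) := by
  have hpal := palPrefix_wpLen (4 * k)
  have hpal' := palPrefix_wpLen (4 * k + 4)
  rw [wpType_four_mul] at hpal
  rw [show wpType (4 * k + 4) = false from wpType_four_mul (k + 1)] at hpal'
  simpa [← wp_eq_prefixWord, map_xor_false] using hpal.exists_overlap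
    (palPrefix_wpLen (4 * k + 3)) hpal' (wpLen_strictMono.monotone (by omega)) hlen

end Recurrences

/-- the recurrence relations between consecutive prefixes of
`u_p = u(1^ω, (EERR)^ω)` (overlap products written via explicit decompositions;
note `wp (4*k-2) = []` for `k = 0`, matching the convention `w_z = ε` for `z ≤ 0`). -/
theorem up_prefix_recurrences (k : ℕ) :
    wp (4*k+1) = wp (4*k) ++ [true, false] ++ Ebar (wp (4*k)) ∧
    (∃ z : Word, wp (4*k+1) = z ++ wp (4*k-2) ∧ wp (4*k+2) = z ++ wp (4*k+1)) ∧
    (∃ z : Word, wp (4*k+2) = z ++ [false, true, false] ∧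
      wp (4*k+3) = z ++ (wp (4*k+2)).reverse) ∧
    (∃ z : Word, wp (4*k+3) = z ++ wp (4*k) ∧ wp (4*k+4) = z ++ wp (4*k+3)) := by
  have hzero := palPrefixesClassified_four_mul k
  have hone := hzero.four_mul_add_one
  have htwo := hone.four_mul_add_two
  have hthree := htwo.four_mul_add_three
  exact ⟨wp_four_mul_add_one hzero.wpLen_four_mul_add_one,
    exists_wp_four_mul_add_two hone.wpLen_four_mul_add_two,
    exists_wp_four_mul_add_three htwo.wpLen_four_mul_add_three,
    exists_wp_four_mul_add_four hthree.wpLen_four_mul_add_four⟩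
end

section
/- In u_p = u(1^ω, (EERR)^ω), for every k ∈ ℕ the prefixes w_{4k+1} and w_{4k+3} are strong bispecial factors; moreover 1·w_{4k+1}·0 is a central factor of w_{4k+5} and 0·w_{4k+3}·0 is a central factor of w_{4k+7}. -/
/-!
Both `R` (reversal) and `E` reverse a word and add a constant `c` to every letter; call the result
`theta c`. The key fact is that a `theta c`-palindromic prefix of `u_p` followed by the letter `0`
is an `R`-palindrome of length at most `3`. By induction on `n`, if such a prefix lay between
`w_n 1` and `w_{n+1}`, comparing its symmetry with that of `w_{n+1}` would produce another one
inside `w_n`, too short to be compatible with the length of `w_{n+1}`. Hence the longest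
pseudopalindromic suffixes of `w_{4k} 1` and `w_{4k+2} 1` are `ε` and `10101`, so that
`w_{4k+1} = w_{4k} 1 0 E(w_{4k})` and `w_{4k+3} = z 10101 R(z)` where `w_{4k+2} = z 1010`. Since
`w_{4k+4}` ends in `1 w_{4k}` and `w_{4k+6}` ends in `0 w_{4k+2}`, these formulas exhibit the two
central factors. The other extensions are read off from the symmetries of the `w_n`, each of which
is followed by `1`.
-/

namespace Pseudostandard

/-- The involutory antimorphisms of binary words: `theta false` is the reversal `R` and
`theta true` is the exchange antimorphism `E`. -/
def theta (c : Bool) (w : Word) : Word := (w.map (c ^^ ·)).reverse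

/-- A `theta c`-palindrome: a palindrome for `c = false`, an `E`-palindrome for `c = true`. -/
def IsThetaPal (c : Bool) (w : Word) : Prop := theta c w = w

/-- `v` is the `theta c`-palindromic closure of `w`. -/
def IsClosure (c : Bool) (w v : Word) : Prop :=
  w <+: v ∧ IsThetaPal c v ∧ ∀ v', w <+: v' → IsThetaPal c v' → v.length ≤ v'.length

lemma prefix_or_eq_or_append_prefix {u v p : Word} {x y : Bool} (hu : u ++ [x] <+: v)
    (hp : p ++ [y] <+: v) : p ++ [y] <+: u ∨ (p = u ∧ y = x) ∨ u ++ [x] <+: p := by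
  obtain h | h := List.prefix_or_prefix_of_prefix hu hp
  · obtain h | h := List.prefix_concat_iff.mp h
    · exact .inr (.inl (by simpa [eq_comm] using List.append_inj' h rfl))
    · exact .inr (.inr h)
  · obtain h | h := List.prefix_concat_iff.mp h
    · exact .inr (.inl (by simpa using List.append_inj' h rfl))
    · exact .inl h

section Theta

variable {a b c x : Bool} {u v w p s : Word}

@[simp] lemma theta_nil (c : Bool) : theta c [] = [] := rfl

@[simp] lemma theta_cons (c x : Bool) (w : Word) : theta c (x :: w) = theta c w ++ [c ^^ x] := by
  simp [theta]

@[simp] lemma theta_append (c : Bool) (u v : Word) :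
    theta c (u ++ v) = theta c v ++ theta c u := by
  simp [theta]

@[simp] lemma length_theta (c : Bool) (w : Word) : (theta c w).length = w.length := by
  simp [theta]

lemma theta_map_xor (a b : Bool) (w : Word) : theta a (w.map (b ^^ ·)) = theta (a ^^ b) w := by
  simp [theta, Function.comp_def]

lemma theta_theta (a b : Bool) (w : Word) : theta a (theta b w) = w.map ((a ^^ b) ^^ ·) := by
  simp [theta, List.map_reverse, Function.comp_def]

@[simp] lemma theta_theta_self (c : Bool) (w : Word) : theta c (theta c w) = w := by
  simp [theta_theta]

lemma theta_comm (a b : Bool) (w : Word) : theta a (theta b w) = theta b (theta a w) := by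
  rw [theta_theta, theta_theta, Bool.xor_comm]

lemma theta_true (w : Word) : theta true w = Ebar w := by
  simp only [theta, Ebar, Bool.true_xor]

lemma theta_false (w : Word) : theta false w = w.reverse := by
  simp [theta]

lemma IsThetaPal.eq (hw : IsThetaPal c w) : theta c w = w := hw

lemma IsThetaPal.theta_suffix (hv : IsThetaPal c v) (h : u <+: v) : theta c u <:+ v := by
  obtain ⟨t, rfl⟩ := h
  exact ⟨theta c t, by rw [← theta_append, hv.eq]⟩

lemma IsThetaPal.theta_prefix (hv : IsThetaPal c v) (h : u <:+ v) : theta c u <+: v := by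
  obtain ⟨t, rfl⟩ := h
  exact ⟨theta c t, by rw [← theta_append, hv.eq]⟩

lemma IsThetaPal.theta_infix (hv : IsThetaPal c v) (h : u <:+: v) : theta c u <:+: v := by
  obtain ⟨t, hut, htv⟩ := List.infix_iff_prefix_suffix.mp h
  obtain ⟨r, rfl⟩ := hut
  exact ((List.suffix_append _ _).isInfix.trans (theta_append c u r ▸ hv.theta_prefix htv).isInfix)

lemma IsThetaPal.theta_of (hp : IsThetaPal c p) (a : Bool) : IsThetaPal c (theta a p) := by
  rw [IsThetaPal, theta_comm, hp.eq]

lemma IsThetaPal.cons_suffix (hv : IsThetaPal c v) (hw : IsThetaPal c w) (h : w ++ [x] <+: v) :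
    (c ^^ x) :: w <:+ v := by
  simpa [hw.eq] using hv.theta_suffix h

lemma IsThetaPal.exists_prefix_of_suffix (hw : IsThetaPal a w) (hs : IsThetaPal c s)
    (hsw : s <:+ w ++ [x]) (hlen : 2 ≤ s.length) :
    ∃ p, IsThetaPal c p ∧ p ++ [a ^^ c ^^ x] <+: w ∧ s.length = p.length + 2 := by
  obtain ⟨y, s, z, rfl⟩ : ∃ y t z, s = y :: (t ++ [z]) := by
    obtain _ | ⟨y, t⟩ := s
    · simp at hlen
    obtain rfl | ⟨t, z, rfl⟩ := List.eq_nil_or_concat t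
    · simp at hlen
    · exact ⟨y, t, z, by simp⟩
  obtain ⟨hys, rfl⟩ : y :: s <:+ w ∧ z = x := by
    obtain ⟨t, ht⟩ := hsw
    have := List.append_inj' (s₁ := t ++ y :: s) (t₁ := [z]) (s₂ := w) (t₂ := [x])
      (by simpa using ht) rfl
    exact ⟨⟨t, this.1⟩, by simpa using this.2⟩
  obtain ⟨rfl, hs, -⟩ : (c ^^ z) = y ∧ theta c s = s ∧ (c ^^ y) = z := by
    simpa [IsThetaPal] using hs
  exact ⟨theta a s, IsThetaPal.theta_of hs a, by simpa using hw.theta_prefix hys, by simp⟩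

lemma IsThetaPal.not_append_true (hw : IsThetaPal false w) (h : [true, false] <+: w) :
    ¬ IsThetaPal c (w ++ [true]) := by
  obtain ⟨t, rfl⟩ := h
  intro hc
  rw [IsThetaPal] at hw hc
  cases c <;> simp_all

/- From `v = p s` one gets `v = theta b s · (p with every letter shifted by b ^^ c)`: the word `v`
has period `|s|` up to a constant shift of the letters, and shifting the end of `w` back by one
period gives `q`. -/
lemma IsThetaPal.exists_prefix_of_two_symmetries (hw : IsThetaPal a w) (hv : IsThetaPal b v)
    (hp : IsThetaPal c p) (hwp : w ++ [x] <+: p) (hpv : p <+: v) (hlt : p.length < v.length)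
    (hle : v.length ≤ w.length + p.length) :
    ∃ q, IsThetaPal (a ^^ (b ^^ c)) q ∧ q ++ [(b ^^ c) ^^ x] <+: w ∧
      q.length + v.length = w.length + p.length := by
  obtain ⟨s, rfl⟩ := hpv
  have hwv : w ++ [x] <+: p ++ s := hwp.trans (List.prefix_append _ _)
  have hperiod : p ++ s = theta b s ++ p.map ((b ^^ c) ^^ ·) := by
    rw [← theta_theta, hp.eq, ← theta_append, hv.eq]
  generalize (b ^^ c) = e at hperiod ⊢
  simp only [List.length_append] at hlt hle
  obtain ⟨r, rfl⟩ : theta b s <+: w :=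
    List.prefix_of_prefix_length_le (hperiod ▸ List.prefix_append _ _)
      ((List.prefix_append _ _).trans hwv) (by rw [length_theta]; omega)
  have hr : r ++ [x] <+: p.map (e ^^ ·) := by
    rwa [hperiod, List.append_assoc, List.prefix_append_right_inj] at hwv
  have hqp : r.map (e ^^ ·) ++ [e ^^ x] <+: p := by
    simpa [Function.comp_def] using hr.map (e ^^ ·)
  have hqw : r.map (e ^^ ·) ++ [e ^^ x] <+: theta b s ++ r :=
    List.prefix_of_prefix_length_le hqp ((List.prefix_append _ _).trans hwp) (by simp; omega)
  have hq : r.map (e ^^ ·) = theta a r :=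
    (List.prefix_of_prefix_length_le ((List.prefix_append _ _).trans hqw)
      (hw.theta_prefix (List.suffix_append _ _)) (by simp)).eq_of_length (by simp)
  refine ⟨r.map (e ^^ ·), ?_, hqw, by simp; omega⟩
  rw [IsThetaPal, theta_map_xor, Bool.xor_assoc, Bool.xor_self, Bool.xor_false, hq]

end Theta

section Closure

variable {c : Bool} {v w x s : Word}

lemma IsClosure.length_le (h : IsClosure c (x ++ s) v) (hs : IsThetaPal c s) :
    v.length ≤ 2 * x.length + s.length := by
  have hpal : IsThetaPal c (x ++ s ++ theta c x) := by simp [IsThetaPal, hs.eq]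
  have := h.2.2 _ (List.prefix_append _ _) hpal
  simp only [List.length_append, length_theta] at this
  omega

lemma IsClosure.eq_of_longest_suffix (h : IsClosure c (x ++ s) v) (hs : IsThetaPal c s)
    (hmax : ∀ s', s' <:+ x ++ s → IsThetaPal c s' → s'.length ≤ s.length) :
    v = x ++ s ++ theta c x := by
  have hlen := h.length_le hs
  obtain ⟨⟨t, rfl⟩, hv, -⟩ := h
  simp only [List.length_append] at hlen
  obtain ⟨s', hs'⟩ : theta c t <+: x ++ s :=
    List.prefix_of_prefix_length_le (hv.theta_prefix (List.suffix_append _ _))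
      (List.prefix_append _ _) (by simp; omega)
  have hs'pal : IsThetaPal c s' := by
    simpa [IsThetaPal, ← hs'] using hv
  have hs'len := hmax s' ⟨_, hs'⟩ hs'pal
  have hcount := congrArg List.length hs'
  simp only [List.length_append, length_theta] at hcount
  obtain ⟨rfl, -⟩ := List.append_inj hs' (by rw [length_theta]; omega)
  simp

lemma isClosure_epalCl (w : Word) : IsClosure true w (epalCl w) := by
  obtain ⟨⟨hpre, hpal⟩, hmin⟩ := (exists_minLength (epal_ext w)).choose_spec
  simp only [IsClosure, IsThetaPal, theta_true]
  exact ⟨hpre, hpal, fun v hv hv' => hmin v ⟨hv, hv'⟩⟩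

lemma isClosure_palCl (w : Word) : IsClosure false w (palCl w) := by
  obtain ⟨⟨hpre, hpal⟩, hmin⟩ := (exists_minLength (pal_ext w)).choose_spec
  simp only [IsClosure, IsThetaPal, theta_false]
  exact ⟨hpre, hpal, fun v hv hv' => hmin v ⟨hv, hv'⟩⟩

lemma IsClosure.eq_of_no_zero_prefix (hv : IsClosure true (w ++ [true]) v) (hw : IsThetaPal false w)
    (hno : ∀ p, IsThetaPal true p → ¬ p ++ [false] <+: w) :
    v = w ++ [true, false] ++ theta true w := by
  have hmax : ∀ s, s <:+ w ++ [true] → IsThetaPal true s → s.length ≤ 0 := by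
    intro s hs hpal
    by_contra! hpos
    obtain hone | htwo : s.length = 1 ∨ 2 ≤ s.length := by omega
    · obtain ⟨y, rfl⟩ := List.length_eq_one_iff.mp hone
      simp [IsThetaPal] at hpal
    · obtain ⟨p, hp, hpw, -⟩ := hw.exists_prefix_of_suffix hpal hs htwo
      exact hno p hp hpw
  rw [← List.append_nil (w ++ [true])] at hv hmax
  simpa using hv.eq_of_longest_suffix rfl hmax

end Closure

/-- The type of the closure producing `w_n`, i.e. the `n`-th letter of `(EERR)^ω`, with `true` for
`E` and `false` for `R`. The value at `0` is immaterial, the empty word being of both types. -/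
def closureType (n : ℕ) : Bool := decide (n % 4 = 1 ∨ n % 4 = 2)

lemma closureType_eq_true {n : ℕ} : closureType n = true ↔ n % 4 = 1 ∨ n % 4 = 2 := by
  simp [closureType]

lemma closureType_eq_false {n : ℕ} : closureType n = false ↔ n % 4 = 0 ∨ n % 4 = 3 := by
  rw [closureType, decide_eq_false_iff_not]
  omega

lemma isClosure_wp (n : ℕ) : IsClosure (closureType (n + 1)) (wp n ++ [true]) (wp (n + 1)) := by
  by_cases h : (n + 1) % 4 = 1 ∨ (n + 1) % 4 = 2
  · rw [wp, if_pos h, closureType_eq_true.mpr h]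
    exact isClosure_epalCl _
  · rw [wp, if_neg h, closureType, decide_eq_false h]
    exact isClosure_palCl _

lemma isThetaPal_wp : ∀ n, IsThetaPal (closureType n) (wp n)
  | 0 => rfl
  | n + 1 => (isClosure_wp n).2.1

lemma wp_append_true_prefix_succ (n : ℕ) : wp n ++ [true] <+: wp (n + 1) := (isClosure_wp n).1

lemma wp_prefix_wp {m n : ℕ} (h : m ≤ n) : wp m <+: wp n := by
  induction n, h using Nat.le_induction with
  | base => exact List.prefix_rfl
  | succ n _ ih => exact ih.trans ((List.prefix_append _ _).trans (wp_append_true_prefix_succ n))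

lemma wp_append_true_prefix {m n : ℕ} (h : m < n) : wp m ++ [true] <+: wp n :=
  (wp_append_true_prefix_succ m).trans (wp_prefix_wp h)

lemma cons_wp_suffix {m n : ℕ} (h : m < n) (htype : closureType m = closureType n) :
    (!closureType n) :: wp m <:+ wp n := by
  simpa using (isThetaPal_wp n).cons_suffix (htype ▸ isThetaPal_wp m) (wp_append_true_prefix h)

lemma wp_one : wp 1 = [true, false] :=
  (isClosure_wp 0).eq_of_no_zero_prefix rfl (by simp [wp])

lemma wp_two : wp 2 = [true, false, true, false] := by
  have hcl : IsClosure true [true, false, true] (wp 2) := by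
    simpa [wp_one, show closureType 2 = true from rfl] using isClosure_wp 1
  refine hcl.eq_of_longest_suffix (x := [true]) (s := [false, true]) rfl fun s hs hpal => ?_
  by_contra! hlen
  obtain rfl := hs.eq_of_length (le_antisymm hs.length_le hlen)
  simp [IsThetaPal] at hpal

lemma wp_two_prefix {n : ℕ} (hn : 2 ≤ n) : [true, false, true, false] <+: wp n :=
  wp_two ▸ wp_prefix_wp hn

lemma exists_wp_eq_append {n : ℕ} (hn : 2 ≤ n) (h : closureType n = true) :
    ∃ z, wp n = z ++ [true, false, true, false] := by
  obtain ⟨z, hz⟩ := (h ▸ isThetaPal_wp n).theta_suffix (wp_two_prefix hn)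
  exact ⟨z, hz.symm⟩

/- The suffixes `010101` (type `E`) and `10101` (type `R`) of `w_n 1` bound the closure. -/
lemma length_wp_succ_le {n : ℕ} (hn : 2 ≤ n) (h : closureType n = true) :
    (wp (n + 1)).length + 3 ≤ 2 * (wp n).length := by
  have hcl := isClosure_wp n
  obtain hn1 | hn2 := closureType_eq_true.mp h
  · rw [closureType_eq_true.mpr (by omega)] at hcl
    obtain ⟨z, hz⟩ := cons_wp_suffix (m := 2) (n := n) (by omega) h.symm
    rw [h, wp_two] at hz
    have hle := IsClosure.length_le (c := true) (x := z)
      (s := [false, true, false, true, false, true]) (by simpa [← hz] using hcl) rfl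
    simp only [← hz, List.length_append, List.length_cons, List.length_nil] at hle ⊢
    omega
  · rw [closureType_eq_false.mpr (by omega)] at hcl
    obtain ⟨z, hz⟩ := exists_wp_eq_append hn h
    have hle := IsClosure.length_le (c := false) (x := z) (s := [true, false, true, false, true])
      (by simpa [hz] using hcl) rfl
    simp only [hz, List.length_append, List.length_cons, List.length_nil] at hle ⊢
    omega

/-- Every `theta c`-palindromic prefix of `w` followed by `0` is an `R`-palindrome of length at
most `3`. In `u_p` these are the words `1` and `101`. -/
def ZeroPrefixesShort (w : Word) : Prop :=
  ∀ c p, IsThetaPal c p → p ++ [false] <+: w → c = false ∧ p.length ≤ 3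

lemma zeroPrefixesShort_wp_succ {n : ℕ} (hn : 2 ≤ n) (ih : ZeroPrefixesShort (wp n)) :
    ZeroPrefixesShort (wp (n + 1)) := by
  intro c p hp hpv
  obtain h | ⟨-, h⟩ | hwp := prefix_or_eq_or_append_prefix (wp_append_true_prefix_succ n) hpv
  · exact ih c p hp h
  · cases h
  exfalso
  obtain ⟨-, hpal, hmin⟩ := isClosure_wp n
  have hlt : p.length < (wp (n + 1)).length := by simpa using hpv.length_le
  have hwp_len : (wp n).length < p.length := by simpa using hwp.length_le
  have hc : (closureType (n + 1) ^^ c) = true := by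
    by_contra hne
    obtain rfl : closureType (n + 1) = c := by simpa using hne
    exact hlt.not_ge (hmin p hwp hp)
  have hpv' : p <+: wp (n + 1) := (List.prefix_append _ _).trans hpv
  by_cases hle : (wp (n + 1)).length ≤ (wp n).length + p.length
  · obtain ⟨q, hq, hqw, hqlen⟩ :=
      (isThetaPal_wp n).exists_prefix_of_two_symmetries hpal hp hwp hpv' hlt hle
    rw [hc] at hq hqw
    obtain ⟨htype, hqshort⟩ := ih _ q hq hqw
    have := length_wp_succ_le hn (by simpa using htype)
    omega
  · have hbound := IsClosure.length_le (s := []) (by simpa using isClosure_wp n) rfl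
    simp only [List.length_append, List.length_cons, List.length_nil] at hbound
    obtain rfl : wp n ++ [true] = p := hwp.eq_of_length (by simp; omega)
    have htype : closureType n = false := by
      by_contra h
      have := length_wp_succ_le hn (by simpa using h)
      omega
    exact IsThetaPal.not_append_true (htype ▸ isThetaPal_wp n)
      ((List.prefix_append _ [true, false]).trans (wp_two_prefix hn)) hp

lemma zeroPrefixesShort_wp_two : ZeroPrefixesShort (wp 2) := by
  intro c p hp hpw
  rw [wp_two] at hpw
  have hmem : p ∈ [true, false, true, false].inits :=
    (List.mem_inits _ _).mpr ((List.prefix_append _ _).trans hpw)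
  simp only [List.inits, List.map_cons, List.map_nil, List.mem_cons, List.not_mem_nil,
    or_false] at hmem
  rcases hmem with rfl | rfl | rfl | rfl | rfl <;> simp_all [IsThetaPal]

lemma zeroPrefixesShort_wp (n : ℕ) : ZeroPrefixesShort (wp n) := by
  obtain hn | hn := le_total n 2
  · exact fun c p hp hpw => zeroPrefixesShort_wp_two c p hp (hpw.trans (wp_prefix_wp hn))
  · induction n, hn using Nat.le_induction with
    | base => exact zeroPrefixesShort_wp_two
    | succ n hn ih => exact zeroPrefixesShort_wp_succ hn ih

lemma wp_four_mul_add_one (k : ℕ) :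
    wp (4 * k + 1) = wp (4 * k) ++ [true, false] ++ theta true (wp (4 * k)) := by
  have hpal := isThetaPal_wp (4 * k)
  have hcl := isClosure_wp (4 * k)
  rw [closureType_eq_false.mpr (by omega)] at hpal
  rw [closureType_eq_true.mpr (by omega)] at hcl
  refine hcl.eq_of_no_zero_prefix hpal fun p hp hpw => ?_
  simpa using (zeroPrefixesShort_wp _ _ p hp hpw).1

lemma wp_four_mul_add_three {k : ℕ} {z : Word}
    (hz : wp (4 * k + 2) = z ++ [true, false, true, false]) :
    wp (4 * k + 3) = z ++ [true, false, true, false, true] ++ theta false z := by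
  have hpal := isThetaPal_wp (4 * k + 2)
  have hcl := isClosure_wp (4 * k + 2)
  rw [closureType_eq_true.mpr (by omega), hz] at hpal
  rw [closureType_eq_false.mpr (by omega), hz, List.append_assoc] at hcl
  refine hcl.eq_of_longest_suffix rfl fun s hs hs_pal => ?_
  by_contra! hlong
  obtain ⟨p, hp, hpw, hlen⟩ :=
    hpal.exists_prefix_of_suffix hs_pal (by simpa using hs) (le_trans (by simp) hlong.le)
  have hp_short := (zeroPrefixesShort_wp _ _ p hp (hz ▸ hpw)).2
  simp only [List.length_append, List.length_cons, List.length_nil] at hlong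
  omega

/-- `u` is a central factor of `v`. -/
def IsCentralFactor (u v : Word) : Prop := ∃ x y : Word, v = x ++ u ++ y ∧ x.length = y.length

lemma isCentralFactor_wp_four_mul_add_five (k : ℕ) :
    IsCentralFactor (true :: wp (4 * k + 1) ++ [false]) (wp (4 * k + 5)) := by
  obtain ⟨t, ht⟩ : true :: wp (4 * k) <:+ wp (4 * (k + 1)) := by
    have htype : closureType (4 * (k + 1)) = false := closureType_eq_false.mpr (by omega)
    simpa [htype] using cons_wp_suffix (m := 4 * k) (n := 4 * (k + 1)) (by omega)
      (htype.symm ▸ closureType_eq_false.mpr (by omega))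
  refine ⟨t, theta true t, ?_, by simp⟩
  rw [show 4 * k + 5 = 4 * (k + 1) + 1 by ring, wp_four_mul_add_one, wp_four_mul_add_one, ← ht]
  simp

lemma isCentralFactor_wp_four_mul_add_seven (k : ℕ) :
    IsCentralFactor (false :: wp (4 * k + 3) ++ [false]) (wp (4 * k + 7)) := by
  have htype (j : ℕ) : closureType (4 * j + 2) = true := closureType_eq_true.mpr (by omega)
  obtain ⟨t, ht⟩ : false :: wp (4 * k + 2) <:+ wp (4 * (k + 1) + 2) := by
    simpa [htype] using cons_wp_suffix (m := 4 * k + 2) (n := 4 * (k + 1) + 2) (by omega)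
      ((htype k).trans (htype (k + 1)).symm)
  obtain ⟨z, hz⟩ := exists_wp_eq_append (by omega) (htype k)
  refine ⟨t, theta false t, ?_, by simp⟩
  rw [show 4 * k + 7 = 4 * (k + 1) + 3 by ring, wp_four_mul_add_three hz,
    wp_four_mul_add_three (z := t ++ false :: z) (by simp [← ht, hz])]
  simp

lemma IsCentralFactor.factorUp {u : Word} {n : ℕ} (h : IsCentralFactor u (wp n)) :
    FactorUp u := by
  obtain ⟨x, y, hxy, -⟩ := h
  exact ⟨n, x, y, hxy.symm⟩

lemma factorUp_theta {v : Word} (c : Bool) (h : FactorUp v) : FactorUp (theta c v) := by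
  obtain ⟨n, hn⟩ := h
  obtain ⟨m, hnm, rfl⟩ : ∃ m, n ≤ m ∧ closureType m = c := by
    cases c
    · exact ⟨4 * n, by omega, closureType_eq_false.mpr (by omega)⟩
    · exact ⟨4 * n + 1, by omega, closureType_eq_true.mpr (by omega)⟩
  exact ⟨m, (isThetaPal_wp m).theta_infix (hn.trans (wp_prefix_wp hnm).isInfix)⟩

lemma factorUp_cons_wp_append_true {l m n : ℕ} (hlm : l ≤ m) (hmn : m < n)
    (htype : closureType m = closureType n) :
    FactorUp ((!closureType n) :: wp l ++ [true]) := by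
  have hprefix : wp l ++ [true] <+: wp m ++ [true] := by
    obtain rfl | hlt := hlm.eq_or_lt
    · exact List.prefix_rfl
    · exact (wp_append_true_prefix hlt).trans (List.prefix_append _ _)
  obtain ⟨r, hr⟩ := hprefix
  obtain ⟨t, ht⟩ := cons_wp_suffix hmn htype
  have hinfix : (!closureType n) :: wp l ++ [true] <:+: wp n ++ [true] := by
    refine ⟨t, r, ?_⟩
    rw [← ht]
    simpa using hr
  exact ⟨n + 1, hinfix.trans (wp_append_true_prefix_succ n).isInfix⟩

/-- `w` is a strong bispecial factor of `u_p`. -/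
def IsStrongBispecial (w : Word) : Prop := ∀ a b : Bool, FactorUp (a :: w ++ [b])

lemma isStrongBispecial_wp_four_mul_add_one (k : ℕ) : IsStrongBispecial (wp (4 * k + 1)) := by
  have hone : closureType (4 * k + 1) = true := closureType_eq_true.mpr (by omega)
  have htwo : closureType (4 * k + 2) = true := closureType_eq_true.mpr (by omega)
  have hthree : closureType (4 * k + 3) = false := closureType_eq_false.mpr (by omega)
  have hfour : closureType (4 * k + 4) = false := closureType_eq_false.mpr (by omega)
  have h01 : FactorUp (false :: wp (4 * k + 1) ++ [true]) := by
    simpa [htwo] using factorUp_cons_wp_append_true le_rfl (by omega) (hone.trans htwo.symm)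
  have h11 : FactorUp (true :: wp (4 * k + 1) ++ [true]) := by
    simpa [hfour] using factorUp_cons_wp_append_true (l := 4 * k + 1) (by omega) (by omega)
      (hthree.trans hfour.symm)
  have h00 : FactorUp (false :: wp (4 * k + 1) ++ [false]) := by
    have hpal : IsThetaPal true (wp (4 * k + 1)) := hone ▸ isThetaPal_wp _
    simpa [hpal.eq] using factorUp_theta true h11
  have h10 := (isCentralFactor_wp_four_mul_add_five k).factorUp
  rintro (_ | _) (_ | _)
  exacts [h00, h01, h10, h11]

lemma isStrongBispecial_wp_four_mul_add_three (k : ℕ) : IsStrongBispecial (wp (4 * k + 3)) := by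
  have hthree : closureType (4 * k + 3) = false := closureType_eq_false.mpr (by omega)
  have hfour : closureType (4 * k + 4) = false := closureType_eq_false.mpr (by omega)
  have hfive : closureType (4 * k + 5) = true := closureType_eq_true.mpr (by omega)
  have hsix : closureType (4 * k + 6) = true := closureType_eq_true.mpr (by omega)
  have h11 : FactorUp (true :: wp (4 * k + 3) ++ [true]) := by
    simpa [hfour] using factorUp_cons_wp_append_true le_rfl (by omega) (hthree.trans hfour.symm)
  have h01 : FactorUp (false :: wp (4 * k + 3) ++ [true]) := by
    simpa [hsix] using factorUp_cons_wp_append_true (l := 4 * k + 3) (by omega) (by omega)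
      (hfive.trans hsix.symm)
  have h10 : FactorUp (true :: wp (4 * k + 3) ++ [false]) := by
    have hpal : IsThetaPal false (wp (4 * k + 3)) := hthree ▸ isThetaPal_wp _
    simpa [hpal.eq] using factorUp_theta false h01
  have h00 := (isCentralFactor_wp_four_mul_add_seven k).factorUp
  rintro (_ | _) (_ | _)
  exacts [h00, h01, h10, h11]

end Pseudostandard

open Pseudostandard in
/-- `w_{4k+1}` and `w_{4k+3}` are strong bispecial factors of `u_p`;
moreover `1·w_{4k+1}·0` is a central factor of `w_{4k+5}` and `0·w_{4k+3}·0` is a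
central factor of `w_{4k+7}`. -/
theorem up_prefixes_strong_bispecial (k : ℕ) :
    (∀ a b : Bool, FactorUp (a :: wp (4*k+1) ++ [b])) ∧
    (∀ a b : Bool, FactorUp (a :: wp (4*k+3) ++ [b])) ∧
    (∃ x y : Word, wp (4*k+5) = x ++ (true :: wp (4*k+1) ++ [false]) ++ y ∧
      x.length = y.length) ∧
    (∃ x y : Word, wp (4*k+7) = x ++ (false :: wp (4*k+3) ++ [false]) ++ y ∧
      x.length = y.length) :=
  ⟨isStrongBispecial_wp_four_mul_add_one k, isStrongBispecial_wp_four_mul_add_three k,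
    isCentralFactor_wp_four_mul_add_five k, isCentralFactor_wp_four_mul_add_seven k⟩
end

section
/- In u_p = u(1^ω,(EERR)^ω), the factors s_{2k+1} (k ≥ 2) together with their images under R and E are exactly the weak bispecial factors of u_p. -/
/-- The weak bispecial candidate `s_{4k+1}` (an overlap product). -/
noncomputable def s1 (k : ℕ) : Word :=
  (wp (4*k-3)).reverse ++ (wp (4*k-1)).drop (wp (4*k-4)).length
    ++ (wp (4*k-3)).drop (wp (4*k-4)).length

/-- The weak bispecial candidate `s_{4k+3}` (an overlap product). -/
noncomputable def s3 (k : ℕ) : Word :=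
  Ebar (wp (4*k-1)) ++ (wp (4*k+1)).drop (wp (4*k-2)).length
    ++ (wp (4*k-1)).drop (wp (4*k-2)).length

/-- `sOdd k = s_{2k+1}`. -/
noncomputable def sOdd (k : ℕ) : Word := if k % 2 = 0 then s1 (k/2) else s3 (k/2)

/-- `w` is a weak bispecial factor of `u_p`. -/
def WeakBSUp (w : Word) : Prop :=
  ((∀ a : Bool, FactorUp (a :: w)) ∧ (∀ b : Bool, FactorUp (w ++ [b]))) ∧
    ((FactorUp (false :: w ++ [true]) ∧ FactorUp (true :: w ++ [false]) ∧
        ¬ FactorUp (false :: w ++ [false]) ∧ ¬ FactorUp (true :: w ++ [true])) ∨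
     (FactorUp (false :: w ++ [false]) ∧ FactorUp (true :: w ++ [true]) ∧
        ¬ FactorUp (false :: w ++ [true]) ∧ ¬ FactorUp (true :: w ++ [false])))


/-!
A factor of `u_p` is determined, up to exchanging the letters, by the word of its differences modulo
two, on which both `R` and `E` act by reversal. The difference word of `wp (n + 2)` is the image
under `psi` of the `n`-th palindromic prefix of the fixed point of the ternary substitution `tau`:
the suffix of `wp n ++ [true]` at the centre of the closure `wp (n + 1)` comes from a palindromic
prefix of that fixed point, and these prefixes can be enumerated by desubstitution.

Both substitutions can be inverted at the occurrences of a marker, and inverting them preserves the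
shape of the extensions of a word up to relabelling. A weak word containing the marker is therefore
the image of a shorter weak word, possibly surrounded by a fixed context, and the words without the
marker are covered by a finite check. Besides the exceptional difference word of `s_5`, this leaves
the images of the `tau`-orbit of a single word, and these are the difference words of
`s_7, s_9, …`.
-/

namespace PseudostandardWord

/-! ### Extensions of factors -/

section Extensions

variable {α : Type*} {L M : List α → Prop} {p q : α → Option Bool} {u : ℕ → List α}
  {v w : List α} {G H : Bool → Bool → Prop}

/-- The language of factors of a sequence of words. -/
def IsFactor (u : ℕ → List α) (v : List α) : Prop := ∃ n, v <:+: u n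

lemma IsFactor.of_infix (h : IsFactor u v) (hw : w <:+: v) : IsFactor u w :=
  h.imp fun _ hn => hw.trans hn

lemma IsFactor.reverse (hu : ∀ n, (u n).reverse = u n) (h : IsFactor u v) :
    IsFactor u v.reverse :=
  h.imp fun n hn => hu n ▸ List.reverse_infix.2 hn

/-- Words avoiding every word of a finite list as a factor. -/
def Avoids (F : List (List α)) (w : List α) : Prop := ∀ z ∈ F, ¬ z <:+: w

instance [DecidableEq α] (F : List (List α)) : DecidablePred (Avoids F) :=
  fun w => inferInstanceAs (Decidable (∀ z ∈ F, ¬ z <:+: w))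

/-- Left special words with respect to a partial labelling `p` of the letters: both labels occur
on the letters that extend `w` to the left within `L`. -/
def LeftSpecial (L : List α → Prop) (p : α → Option Bool) (w : List α) : Prop :=
  ∀ i, ∃ x, p x = some i ∧ L (x :: w)

instance [Fintype α] [DecidablePred L] : Decidable (LeftSpecial L p w) :=
  inferInstanceAs (Decidable (∀ i, ∃ x, p x = some i ∧ L (x :: w)))

/-- The two-sided extensions of `w` within `L`, recorded through labellings of the left and of
the right extending letters. -/
def BiExt (L : List α → Prop) (p q : α → Option Bool) (w : List α) (i j : Bool) : Prop :=
  ∃ x y, p x = some i ∧ q y = some j ∧ L (x :: w ++ [y])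

instance [Fintype α] [DecidablePred L] (i j : Bool) : Decidable (BiExt L p q w i j) :=
  inferInstanceAs (Decidable (∃ x y, p x = some i ∧ q y = some j ∧ L (x :: w ++ [y])))

/-- The extension graphs of weak bispecial words: `{01, 10}` for `s = true`, and `{00, 11}` for
`s = false`. -/
def IsWeak (G : Bool → Bool → Prop) : Prop := ∃ s, ∀ i j, G i j ↔ (i ^^ j) = s

lemma LeftSpecial.imp (hLM : ∀ v, L v → M v) (h : LeftSpecial L p w) : LeftSpecial M p w :=
  fun i => (h i).imp fun _ hx => ⟨hx.1, hLM _ hx.2⟩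

lemma LeftSpecial.of_prefix (h : LeftSpecial (IsFactor u) p v) (hw : w <+: v) :
    LeftSpecial (IsFactor u) p w :=
  fun i => (h i).imp fun x hx => ⟨hx.1, hx.2.of_infix ((List.prefix_cons_inj x).2 hw).isInfix⟩

lemma BiExt.imp (hLM : ∀ v, L v → M v) {i j : Bool} (h : BiExt L p q w i j) :
    BiExt M p q w i j :=
  let ⟨x, y, hx, hy, hL⟩ := h
  ⟨x, y, hx, hy, hLM _ hL⟩

lemma IsWeak.exists_right (h : IsWeak G) (i : Bool) : ∃ j, G i j :=
  let ⟨s, hs⟩ := h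
  ⟨i ^^ s, (hs _ _).2 (by simp)⟩

lemma IsWeak.exists_left (h : IsWeak G) (j : Bool) : ∃ i, G i j :=
  let ⟨s, hs⟩ := h
  ⟨s ^^ j, (hs _ _).2 (by simp)⟩

lemma not_isWeak_of_forall (i : Bool) (h : ∀ j, G i j) : ¬ IsWeak G := fun ⟨s, hs⟩ => by
  have h₀ := (hs i false).1 (h false)
  have h₁ := (hs i true).1 (h true)
  cases i <;> simp_all

lemma isWeak_congr_xor (s s' : Bool) (h : ∀ i j, G i j ↔ H (i ^^ s) (j ^^ s')) :
    IsWeak G ↔ IsWeak H := by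
  constructor
  · rintro ⟨r, hr⟩
    refine ⟨r ^^ (s ^^ s'), fun i j => ?_⟩
    have := (h (i ^^ s) (j ^^ s')).symm.trans (hr _ _)
    simp only [Bool.xor_assoc, Bool.xor_self, Bool.xor_false] at this
    rw [this]
    cases i <;> cases j <;> cases s <;> cases s' <;> simp
  · rintro ⟨r, hr⟩
    refine ⟨r ^^ (s ^^ s'), fun i j => ?_⟩
    rw [h, hr]
    cases i <;> cases j <;> cases s <;> cases s' <;> simp

lemma IsWeak.leftSpecial (h : IsWeak (BiExt (IsFactor u) p q w)) :
    LeftSpecial (IsFactor u) p w := fun i => by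
  obtain ⟨_, x, y, hx, -, hL⟩ := h.exists_right i
  exact ⟨x, hx, hL.of_infix (List.prefix_append _ _).isInfix⟩

lemma IsWeak.biExt_reverse (hu : ∀ n, (u n).reverse = u n)
    (h : IsWeak (BiExt (IsFactor u) p q w)) : IsWeak (BiExt (IsFactor u) q p w.reverse) := by
  obtain ⟨s, hs⟩ := h
  refine ⟨s, fun i j => ?_⟩
  rw [Bool.xor_comm, ← hs]
  constructor
  · rintro ⟨x, y, hx, hy, hL⟩
    exact ⟨y, x, hy, hx, by simpa using hL.reverse hu⟩
  · rintro ⟨x, y, hx, hy, hL⟩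
    exact ⟨y, x, hy, hx, by simpa using hL.reverse hu⟩

lemma Avoids.of_infix {F : List (List α)} (h : Avoids F v) (hw : w <:+: v) : Avoids F w :=
  fun z hz hzw => h z hz (hzw.trans hw)

/-- The left special words avoiding `G` form a prefix-closed set, so that they are found by
extending the known ones by single letters. -/
lemma LeftSpecial.mem_of_avoids {F G S : List (List α)} (hL : ∀ v, L v → Avoids F v)
    (nil_mem : [] ∈ S) (append_mem : ∀ w ∈ S, ∀ x, LeftSpecial (Avoids F) p (w ++ [x]) →
      Avoids G (w ++ [x]) → w ++ [x] ∈ S) (h : LeftSpecial L p w) (hG : Avoids G w) : w ∈ S := by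
  replace h := h.imp hL
  induction w using List.reverseRecOn with
  | nil => exact nil_mem
  | append_singleton w x ih =>
    refine append_mem w (ih (hG.of_infix (List.prefix_append w [x]).isInfix) fun i => ?_) x h hG
    exact (h i).imp fun y hy => ⟨hy.1, hy.2.of_infix (List.prefix_append (y :: w) [x]).isInfix⟩

end Extensions

/-! ### Occurrences of a marker -/

section Occurrences

variable {α : Type*} {m v : List α}

lemma exists_first_occurrence (hm : m ≠ []) (h : m <:+: v) :
    ∃ l, l ++ m <+: v ∧ ¬ m <:+: (l ++ m).dropLast := by
  induction v using List.reverseRecOn with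
  | nil => exact absurd (List.infix_nil.1 h) hm
  | append_singleton v x ih =>
    by_cases hv : m <:+: v
    · obtain ⟨l, hl, hfirst⟩ := ih hv
      exact ⟨l, hl.trans (List.prefix_append _ _), hfirst⟩
    · obtain ⟨l, hl⟩ := (List.infix_concat_iff.1 h).resolve_right hv
      exact ⟨l, hl ▸ List.prefix_rfl, by rwa [hl, List.dropLast_concat]⟩

lemma exists_first_last_occurrence (hm : m ≠ []) (hrev : m.reverse = m) (h : m <:+: v) :
    ∃ l y r, v = l ++ (y ++ m) ++ r.reverse ∧ m <+: y ++ m ∧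
      ¬ m <:+: (l ++ m).dropLast ∧ ¬ m <:+: (r ++ m).dropLast := by
  obtain ⟨l, hl, hfirst⟩ := exists_first_occurrence hm h
  obtain ⟨r, ⟨z, hz⟩, hlast⟩ :=
    exists_first_occurrence (v := v.reverse) hm (by simpa [hrev] using List.reverse_infix.2 h)
  have hv : v = z.reverse ++ m ++ r.reverse := by
    rw [← List.reverse_reverse v, ← hz]
    simp [hrev]
  have hle : l.length ≤ z.reverse.length := by
    by_contra! hlt
    refine hfirst (List.IsInfix.trans ⟨z.reverse, [], List.append_nil _⟩
      (List.prefix_of_prefix_length_le (l₃ := v) ⟨r.reverse, hv.symm⟩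
        ((List.dropLast_prefix _).trans hl) ?_).isInfix)
    simp only [List.length_append, List.length_dropLast]
    omega
  obtain ⟨y, hy⟩ := List.prefix_of_prefix_length_le ((List.prefix_append l m).trans hl)
    (⟨m ++ r.reverse, by simp [hv]⟩ : z.reverse <+: v) hle
  have hv' : v = l ++ (y ++ m) ++ r.reverse := by simp [hv, ← hy]
  refine ⟨l, y, r, hv', ?_, hfirst, hlast⟩
  rw [hv', List.append_assoc, List.prefix_append_right_inj] at hl
  exact List.prefix_of_prefix_length_le hl (List.prefix_append _ _) (by simp)

end Occurrences

/-! ### Marked substitutions -/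

/-- A substitution followed by a fixed palindromic marker, `w ↦ σ(w)m`. Conjugation by `m` reverses
the blocks, so that images of palindromes are palindromes, and every occurrence of `m` in an image
starts at the boundary of a block. -/
structure MarkedSubst (α β : Type*) where
  block : α → List β
  marker : List β
  marker_ne_nil : marker ≠ []
  marker_reverse : marker.reverse = marker
  block_ne_nil : ∀ x, block x ≠ []
  block_injective : Function.Injective block
  marker_append_reverse_block : ∀ x, marker ++ (block x).reverse = block x ++ marker
  sync : ∀ x s t r, s ++ (marker ++ t) = block x ++ (marker ++ r) → s = [] ∨ block x <+: s

namespace MarkedSubst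

variable {α β : Type*} (σ : MarkedSubst α β)

/-- The image `σ(w)m` of a word under a marked substitution. -/
def image (w : List α) : List β := w.flatMap σ.block ++ σ.marker

lemma image_cons (x : α) (w : List α) : σ.image (x :: w) = σ.block x ++ σ.image w := by
  simp [image]

lemma image_append (v w : List α) : σ.image (v ++ w) = v.flatMap σ.block ++ σ.image w := by
  simp [image]

lemma image_ne_nil (w : List α) : σ.image w ≠ [] := by simp [image, σ.marker_ne_nil]

lemma marker_append_reverse_flatMap (w : List α) :
    σ.marker ++ (w.flatMap σ.block).reverse = σ.image w.reverse := by
  induction w with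
  | nil => simp [image]
  | cons x w ih =>
    rw [List.flatMap_cons, List.reverse_append, ← List.append_assoc, ih, List.reverse_cons]
    simp [image, σ.marker_append_reverse_block]

lemma marker_prefix_image (w : List α) : σ.marker <+: σ.image w := by
  rw [← w.reverse_reverse, ← marker_append_reverse_flatMap]
  exact List.prefix_append _ _

lemma image_reverse (w : List α) : σ.image w.reverse = (σ.image w).reverse := by
  rw [← marker_append_reverse_flatMap, image, List.reverse_append, σ.marker_reverse]

lemma image_prefix_image {v w : List α} (h : v <+: w) : σ.image v <+: σ.image w := by
  obtain ⟨z, rfl⟩ := h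
  rw [image_append]
  exact (List.prefix_append_right_inj _).2 (σ.marker_prefix_image z)

lemma image_infix_image {v w : List α} (h : v <:+: w) : σ.image v <:+: σ.image w := by
  obtain ⟨s, t, rfl⟩ := h
  rw [List.append_assoc, image_append]
  exact List.IsInfix.trans (σ.image_prefix_image (List.prefix_append v t)).isInfix
    (List.suffix_append _ _).isInfix

lemma image_append_congr {u v z : List α} {z' : List β}
    (h : σ.image (u ++ z) = σ.image u ++ z') : σ.image (v ++ z) = σ.image v ++ z' := by
  rw [image_append, image.eq_def σ u, List.append_assoc] at h
  rw [image_append, List.append_cancel_left h, image, List.append_assoc]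

lemma flatMap_block_eq_nil {w : List α} (h : w.flatMap σ.block = []) : w = [] :=
  List.eq_nil_iff_forall_not_mem.2 fun x hx => σ.block_ne_nil x (List.flatMap_eq_nil_iff.1 h x hx)

lemma exists_eq_append_of_marker {W : List α} {s t : List β}
    (h : s ++ (σ.marker ++ t) = σ.image W) :
    ∃ w₁ w₂, W = w₁ ++ w₂ ∧ s = w₁.flatMap σ.block ∧ σ.marker ++ t = σ.image w₂ := by
  induction W generalizing s with
  | nil =>
    have hs : s = [] := List.eq_nil_of_length_eq_zero (by
      have := congrArg List.length h
      simp only [image, List.flatMap_nil, List.nil_append, List.length_append] at this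
      omega)
    subst hs
    exact ⟨[], [], rfl, rfl, h⟩
  | cons x W ih =>
    rw [image_cons] at h
    obtain ⟨r, hr⟩ := σ.marker_prefix_image W
    rcases σ.sync x s t r (by rw [h, hr]) with rfl | ⟨s', rfl⟩
    · exact ⟨[], x :: W, rfl, rfl, by rw [image_cons, ← h, List.nil_append]⟩
    · rw [List.append_assoc] at h
      obtain ⟨w₁, w₂, rfl, rfl, hw₂⟩ := ih (List.append_cancel_left h)
      exact ⟨x :: w₁, w₂, rfl, rfl, hw₂⟩

lemma image_injective : Function.Injective σ.image := by
  have block_prefix {x y : α} {v w : List α}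
      (h : σ.block x ++ σ.image v = σ.block y ++ σ.image w) : σ.block y <+: σ.block x := by
    obtain ⟨t, ht⟩ := σ.marker_prefix_image v
    obtain ⟨r, hr⟩ := σ.marker_prefix_image w
    rw [← ht, ← hr] at h
    exact (σ.sync y _ t r h).resolve_left (σ.block_ne_nil x)
  have image_nil_ne {x : α} {w : List α} (h : σ.image [] = σ.image (x :: w)) : False := by
    have hlen := congrArg List.length h
    have := List.length_pos_iff.2 (σ.block_ne_nil x)
    simp only [image, List.flatMap_nil, List.flatMap_cons, List.length_append, List.length_nil]
      at hlen
    omega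
  intro v
  induction v with
  | nil =>
    rintro (_ | ⟨y, w⟩) h
    exacts [rfl, (image_nil_ne h).elim]
  | cons x v ih =>
    rintro (_ | ⟨y, w⟩) h
    · exact (image_nil_ne h.symm).elim
    · rw [image_cons, image_cons] at h
      obtain rfl := σ.block_injective
        ((block_prefix h.symm).eq_of_length_le (block_prefix h).length_le)
      rw [ih (List.append_cancel_left h)]

lemma exists_eq_append_of_marked {W : List α} {s t y : List β} (hy : σ.marker <+: y ++ σ.marker)
    (h : s ++ (y ++ σ.marker) ++ t = σ.image W) :
    ∃ w₁ w w₂, W = w₁ ++ w ++ w₂ ∧ s = w₁.flatMap σ.block ∧ y ++ σ.marker = σ.image w ∧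
      σ.marker ++ t = σ.image w₂ := by
  obtain ⟨z, hz⟩ := hy
  rw [← hz, List.append_assoc, List.append_assoc] at h
  obtain ⟨w₁, W', rfl, rfl, hW'⟩ := σ.exists_eq_append_of_marker h
  rw [← List.append_assoc, hz, List.append_assoc] at hW'
  obtain ⟨w, w₂, rfl, rfl, hw₂⟩ := σ.exists_eq_append_of_marker hW'
  exact ⟨w₁, w, w₂, (List.append_assoc _ _ _).symm, rfl, rfl, hw₂⟩

lemma length_lt_length_image (w : List α) : w.length < (σ.image w).length := by
  induction w with
  | nil => exact List.length_pos_iff.2 (σ.image_ne_nil [])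
  | cons x w ih =>
    have := List.length_pos_iff.2 (σ.block_ne_nil x)
    rw [image_cons, List.length_append, List.length_cons]
    omega

lemma exists_palindrome_of_prefix_image {q : List β} {W : List α} (hq : q.reverse = q)
    (hm : σ.marker <+: q) (h : q <+: σ.image W) : ∃ w, w.reverse = w ∧ w <+: W ∧ q = σ.image w := by
  obtain ⟨y, rfl⟩ : σ.marker <:+ q := by
    simpa [hq, σ.marker_reverse] using List.reverse_suffix.2 hm
  obtain ⟨t, ht⟩ := h
  obtain ⟨w₁, w, w₂, rfl, hw₁, hw, -⟩ := σ.exists_eq_append_of_marked (s := []) hm ht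
  obtain rfl := σ.flatMap_block_eq_nil hw₁.symm
  refine ⟨w, σ.image_injective ?_, List.prefix_append _ _, hw⟩
  rw [image_reverse, ← hw, hq]

lemma exists_infix_image_pair [Nonempty α] {z : List β} {W : List α}
    (hz : z.length ≤ σ.marker.length + 2) (h : z <:+: σ.image W) :
    ∃ x y, z <:+: σ.image [x, y] := by
  induction W with
  | nil =>
    obtain ⟨x⟩ := ‹Nonempty α›
    exact ⟨x, x, h.trans (σ.image_prefix_image List.nil_prefix).isInfix⟩
  | cons x W ih =>
    obtain ⟨s, t, hst⟩ := h
    by_cases hs : σ.block x <+: s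
    · obtain ⟨s', rfl⟩ := hs
      rw [image_cons, List.append_assoc, List.append_assoc] at hst
      exact ih ⟨s', t, by rw [List.append_assoc, List.append_cancel_left hst]⟩
    · have hlt : s.length < (σ.block x).length := by
        by_contra! hle
        exact hs (List.prefix_of_prefix_length_le ⟨σ.image W, (σ.image_cons x W).symm⟩
          ⟨z ++ t, by rw [← hst, List.append_assoc]⟩ hle)
      have hsz : s ++ z <+: σ.image (x :: W) := ⟨t, hst⟩
      suffices ∃ y, s ++ z <+: σ.image [x, y] from
        ⟨x, this.imp fun _ hy => (List.suffix_append s z).isInfix.trans hy.isInfix⟩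
      rcases W with _ | ⟨y, W⟩
      · exact ⟨x, hsz.trans (σ.image_prefix_image ⟨[x], rfl⟩)⟩
      · refine ⟨y, List.prefix_of_prefix_length_le hsz (σ.image_prefix_image ⟨W, rfl⟩) ?_⟩
        have := List.length_pos_iff.2 (σ.block_ne_nil y)
        simp only [image, List.length_append, List.flatMap_cons, List.flatMap_nil,
          List.length_nil]
        omega

lemma avoids_of_isFactor_image [Nonempty α] {F : List (List β)} {u : ℕ → List α} {v : List β}
    (hF : ∀ z ∈ F, z.length ≤ σ.marker.length + 2) (hpair : ∀ x y, Avoids F (σ.image [x, y]))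
    (h : IsFactor (σ.image ∘ u) v) : Avoids F v := by
  intro z hz hzv
  obtain ⟨n, hn⟩ := h
  obtain ⟨x, y, hxy⟩ := σ.exists_infix_image_pair (hF z hz) (hzv.trans hn)
  exact hpair x y z hz hxy

variable {u : ℕ → List α} {v : List β} {w : List α} {l r : List β}

lemma isFactor_image_iff :
    IsFactor (σ.image ∘ u) (l ++ σ.image w ++ r.reverse) ↔
      ∃ w₁ w₂ : List α, l <:+ w₁.flatMap σ.block ∧ r <:+ w₂.flatMap σ.block ∧
        IsFactor u (w₁ ++ w ++ w₂.reverse) := by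
  constructor
  · rintro ⟨n, s, t, hst⟩
    obtain ⟨w₁, w', w₂, hW, hw₁, hw, hw₂⟩ :=
      σ.exists_eq_append_of_marked (W := u n) (s := s ++ l) (t := r.reverse ++ t)
        (σ.marker_prefix_image w) (by rw [← image]; simpa using hst)
    obtain rfl := σ.image_injective hw
    refine ⟨w₁, w₂.reverse, ⟨s, hw₁⟩, ⟨t.reverse, ?_⟩, n, by simp [hW]⟩
    rw [← w₂.reverse_reverse, ← marker_append_reverse_flatMap] at hw₂
    simpa using congrArg List.reverse (List.append_cancel_left hw₂)
  · rintro ⟨w₁, w₂, ⟨s, hs⟩, ⟨t, ht⟩, n, hn⟩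
    refine ⟨n, List.IsInfix.trans ⟨s, t.reverse, ?_⟩ (σ.image_infix_image hn)⟩
    rw [List.append_assoc w₁, image_append, image_append, ← marker_append_reverse_flatMap, ← hs,
      ← ht]
    simp [image]

/-- Left contexts of images: a letter labelled `i` by `p` precedes `l ++ σ.image w` exactly when a
letter labelled `i ^^ s` by `q` precedes `w`. The arbitrary word `k` stands for the image of what
comes before that letter. -/
def LeftContext (p : β → Option Bool) (s : Bool) (l : List β) (q : α → Option Bool) : Prop :=
  ∀ x i, (q x = some (i ^^ s) → ∃ y, p y = some i ∧ y :: l <:+ σ.block x) ∧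
    ∀ y k, p y = some i → y :: l <:+ k ++ σ.block x → q x = some (i ^^ s)

variable {σ} {p : β → Option Bool} {q q' : α → Option Bool} {s s' : Bool}

lemma LeftContext.exists_block (h : σ.LeftContext p s l q) {w₁ : List α} {y : β} {i : Bool}
    (hy : p y = some i) (hl : y :: l <:+ w₁.flatMap σ.block) :
    ∃ w x, w₁ = w ++ [x] ∧ q x = some (i ^^ s) := by
  induction w₁ using List.reverseRecOn with
  | nil => simp at hl
  | append_singleton w x =>
    exact ⟨w, x, rfl, (h x i).2 y _ hy (by simpa [List.flatMap_append] using hl)⟩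

lemma biExt_image_iff (hl : σ.LeftContext p s l q) (hr : σ.LeftContext p s' r q') (i j : Bool) :
    BiExt (IsFactor (σ.image ∘ u)) p p (l ++ σ.image w ++ r.reverse) i j ↔
      BiExt (IsFactor u) q q' w (i ^^ s) (j ^^ s') := by
  have ext (x y : β) : x :: (l ++ σ.image w ++ r.reverse) ++ [y] =
      (x :: l) ++ σ.image w ++ (y :: r).reverse := by simp
  constructor
  · rintro ⟨x, y, hx, hy, hL⟩
    rw [ext, isFactor_image_iff] at hL
    obtain ⟨w₁, w₂, hw₁, hw₂, hL⟩ := hL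
    obtain ⟨w₁, x', rfl, hx'⟩ := hl.exists_block hx hw₁
    obtain ⟨w₂, y', rfl, hy'⟩ := hr.exists_block hy hw₂
    exact ⟨x', y', hx', hy', hL.of_infix ⟨w₁, w₂.reverse, by simp⟩⟩
  · rintro ⟨x, y, hx, hy, hL⟩
    obtain ⟨x', hx', hxl⟩ := (hl x i).1 hx
    obtain ⟨y', hy', hyr⟩ := (hr y j).1 hy
    refine ⟨x', y', hx', hy', ?_⟩
    rw [ext, isFactor_image_iff]
    exact ⟨[x], [y], by simpa using hxl, by simpa using hyr, by simpa using hL⟩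

lemma isWeak_image_iff (hl : σ.LeftContext p s l q) (hr : σ.LeftContext p s' r q') :
    IsWeak (BiExt (IsFactor (σ.image ∘ u)) p p (l ++ σ.image w ++ r.reverse)) ↔
      IsWeak (BiExt (IsFactor u) q q' w) :=
  isWeak_congr_xor s s' (biExt_image_iff hl hr)

lemma LeftContext.exists_next (h : σ.LeftContext p s [] q) {v w : List α} {x : α} {i : Bool}
    (hx : q x = some (i ^^ s)) (hv : v ++ [x] <+: w) :
    ∃ y, p y = some i ∧ σ.image v ++ [y] <+: σ.image w := by
  obtain ⟨y, hy, k, hk⟩ := (h x i).1 hx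
  refine ⟨y, hy, List.IsPrefix.trans ⟨k.reverse, ?_⟩ (σ.image_prefix_image hv)⟩
  rw [image_append, image_cons, image, image, List.flatMap_nil, List.nil_append,
    ← σ.marker_append_reverse_block, ← hk]
  simp

/-- The middle part `σ.image w` runs from the first to the last occurrence of the marker in `v`. -/
lemma exists_context_decomposition (hu : ∀ n, (u n).reverse = u n)
    (hv : IsWeak (BiExt (IsFactor (σ.image ∘ u)) p p v)) (hm : σ.marker <:+: v) :
    ∃ l w r, v = l ++ σ.image w ++ r.reverse ∧
      (LeftSpecial (IsFactor (σ.image ∘ u)) p (l ++ σ.marker).dropLast ∧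
        ¬ σ.marker <:+: (l ++ σ.marker).dropLast) ∧
      LeftSpecial (IsFactor (σ.image ∘ u)) p (r ++ σ.marker).dropLast ∧
        ¬ σ.marker <:+: (r ++ σ.marker).dropLast := by
  have hσu (n : ℕ) : ((σ.image ∘ u) n).reverse = (σ.image ∘ u) n := by
    rw [Function.comp_apply, ← image_reverse, hu]
  obtain ⟨l, y, r, hlyr, hy, hl, hr⟩ :=
    exists_first_last_occurrence σ.marker_ne_nil σ.marker_reverse hm
  have prefix_dropLast {z k : List β} (k' : List β) (h : σ.marker <+: k) :
      (z ++ σ.marker).dropLast <+: z ++ k ++ k' :=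
    (List.dropLast_prefix _).trans
      (((List.prefix_append_right_inj z).2 h).trans (List.prefix_append _ _))
  have hy' : σ.marker <+: (y ++ σ.marker).reverse := by simp [σ.marker_reverse]
  have hvr : v.reverse = r ++ (y ++ σ.marker).reverse ++ l.reverse := by simp [hlyr]
  obtain ⟨n, s, t, hst⟩ : IsFactor (σ.image ∘ u) v := by
    obtain ⟨x, -, hx⟩ := hv.leftSpecial true
    exact hx.of_infix (List.suffix_cons x v).isInfix
  obtain ⟨-, w, -, -, -, hw, -⟩ := σ.exists_eq_append_of_marked (W := u n) (s := s ++ l)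
    (t := r.reverse ++ t) hy (by simpa [hlyr] using hst)
  refine ⟨l, w, r, hw ▸ hlyr, ⟨hv.leftSpecial.of_prefix ?_, hl⟩,
    (hv.biExt_reverse hσu).leftSpecial.of_prefix ?_, hr⟩
  · exact hlyr ▸ prefix_dropLast _ hy
  · exact hvr ▸ prefix_dropLast _ hy'

end MarkedSubst

/-! ### The ternary fixed point -/

/-- The letters of the ternary word coding the difference sequence of `u_p`. -/
inductive Letter
  | a | b | c
  deriving DecidableEq

open Letter

instance : Fintype Letter := ⟨{a, b, c}, by rintro (_ | _ | _) <;> decide⟩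

instance : Nonempty Letter := ⟨a⟩

/-- The substitution `a ↦ abac`, `b ↦ aba`, `c ↦ abaa` with marker `aba`. -/
def tau : MarkedSubst Letter Letter where
  block
    | a => [a, b, a, c]
    | b => [a, b, a]
    | c => [a, b, a, a]
  marker := [a, b, a]
  marker_ne_nil := by decide
  marker_reverse := by decide
  block_ne_nil := by decide
  block_injective := by decide
  marker_append_reverse_block := by decide
  sync := by
    rintro (_ | _ | _) (_ | ⟨_, _ | ⟨_, _ | ⟨_, _ | ⟨_, _⟩⟩⟩⟩) t r h <;> simp_all

/-- The substitution `a ↦ 1`, `b ↦ 1110`, `c ↦ 111010` with marker `111`, which maps the ternary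
word to the difference sequence of `u_p`. -/
def psi : MarkedSubst Letter Bool where
  block
    | a => [true]
    | b => [true, true, true, false]
    | c => [true, true, true, false, true, false]
  marker := [true, true, true]
  marker_ne_nil := by decide
  marker_reverse := by decide
  block_ne_nil := by decide
  block_injective := by decide
  marker_append_reverse_block := by decide
  sync := by
    rintro (_ | _ | _) (_ | ⟨_, _ | ⟨_, _ | ⟨_, _ | ⟨_, _ | ⟨_, _ | ⟨_, _⟩⟩⟩⟩⟩⟩) t r h <;>
      simp_all

/-- The palindromic prefixes of the ternary word. -/
def palPrefix : ℕ → List Letter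
  | 0 => []
  | 1 => [a]
  | n + 2 => tau.image (palPrefix n)

/-- The labelling distinguishing `a` from `b` and `c`. -/
def labelA : Letter → Option Bool
  | a => some true
  | _ => some false

/-- The labelling distinguishing `b` from `c`. -/
def labelBC : Letter → Option Bool
  | a => none
  | b => some true
  | c => some false

lemma reverse_palPrefix (n : ℕ) : (palPrefix n).reverse = palPrefix n := by
  induction n using Nat.twoStepInduction with
  | zero => rfl
  | one => rfl
  | more n ih _ => rw [palPrefix, ← tau.image_reverse, ih]

lemma palPrefix_prefix_succ (n : ℕ) : palPrefix n <+: palPrefix (n + 1) := by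
  induction n using Nat.twoStepInduction with
  | zero => decide
  | one => decide
  | more n ih _ => exact tau.image_prefix_image ih

lemma palPrefix_prefix {m n : ℕ} (h : m ≤ n) : palPrefix m <+: palPrefix n :=
  Nat.le_induction List.prefix_rfl (fun n _ ih => ih.trans (palPrefix_prefix_succ n)) n h

lemma isFactor_tau_image : IsFactor (tau.image ∘ palPrefix) = IsFactor palPrefix := by
  funext v
  refine propext ⟨fun ⟨n, hn⟩ => ⟨n + 2, hn⟩, fun ⟨n, hn⟩ => ⟨n, ?_⟩⟩
  exact hn.trans (palPrefix_prefix (Nat.le_add_right n 2)).isInfix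

lemma eq_palPrefix_of_prefix {N : ℕ} {q : List Letter} (hq : q.reverse = q)
    (h : q <+: palPrefix N) : ∃ n, q = palPrefix n := by
  induction N using Nat.twoStepInduction generalizing q with
  | zero => exact ⟨0, List.prefix_nil.1 h⟩
  | one =>
    have : q ∈ [[], [a]] := (List.mem_inits q [a]).2 h
    fin_cases this
    exacts [⟨0, rfl⟩, ⟨1, rfl⟩]
  | more N ih _ =>
    rcases List.prefix_or_prefix_of_prefix (tau.marker_prefix_image (palPrefix N)) h with hm | hm
    · obtain ⟨w, hw, hwN, rfl⟩ := tau.exists_palindrome_of_prefix_image hq hm h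
      obtain ⟨n, rfl⟩ := ih hw hwN
      exact ⟨n + 2, rfl⟩
    · have : q ∈ [[], [a], [a, b], [a, b, a]] := (List.mem_inits q [a, b, a]).2 hm
      fin_cases this
      exacts [⟨0, rfl⟩, ⟨1, rfl⟩, absurd hq (by decide), ⟨2, rfl⟩]

lemma eq_psi_image_of_prefix {N : ℕ} {q : List Bool} (hq : q.reverse = q)
    (h : q <+: psi.image (palPrefix N)) :
    q = [] ∨ q = [true] ∨ q = [true, true] ∨ ∃ n, q = psi.image (palPrefix n) := by
  rcases List.prefix_or_prefix_of_prefix (psi.marker_prefix_image (palPrefix N)) h with hm | hm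
  · obtain ⟨w, hw, hwN, rfl⟩ := psi.exists_palindrome_of_prefix_image hq hm h
    obtain ⟨n, rfl⟩ := eq_palPrefix_of_prefix hw hwN
    exact .inr (.inr (.inr ⟨n, rfl⟩))
  · have : q ∈ [[], [true], [true, true], psi.image (palPrefix 0)] :=
      (List.mem_inits q [true, true, true]).2 hm
    fin_cases this
    exacts [.inl rfl, .inr (.inl rfl), .inr (.inr (.inl rfl)), .inr (.inr (.inr ⟨0, rfl⟩))]

/-! ### Contexts and short factors -/

lemma tau_leftContext_nil : tau.LeftContext labelA true [] labelA := by
  rintro (_ | _ | _) (_ | _) <;> refine ⟨by decide, fun y k => ?_⟩ <;>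
    rw [← List.reverse_prefix] <;> cases y <;> simp [tau, labelA]

lemma tau_leftContext_a : tau.LeftContext labelA true [a] labelBC := by
  rintro (_ | _ | _) (_ | _) <;> refine ⟨by decide, fun y k => ?_⟩ <;>
    rw [← List.reverse_prefix] <;> cases y <;> simp [tau, labelA, labelBC]

lemma psi_leftContext_nil : psi.LeftContext some false [] labelA := by
  rintro (_ | _ | _) (_ | _) <;> refine ⟨by decide, fun y k => ?_⟩ <;>
    rw [← List.reverse_prefix] <;> cases y <;> simp [psi, labelA]

lemma psi_leftContext_true_false : psi.LeftContext some false [true, false] labelBC := by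
  rintro (_ | _ | _) (_ | _) <;> refine ⟨by decide, fun y k => ?_⟩ <;>
    rw [← List.reverse_prefix] <;> cases y <;> simp [psi, labelBC]

/-- Some short words that are not factors of the ternary word. -/
def tauForbidden : List (List Letter) :=
  [[b, b], [c, b], [b, c], [c, c], [b, a, b], [a, a, c], [c, a, a], [c, a, c], [a, a, a, a]]

/-- Some short words that are not factors of the image of the ternary word under `psi`. -/
def psiForbidden : List (List Bool) :=
  [[false, false], [false, true, true, false], [false, true, false, true, false]]

lemma IsFactor.avoids_tauForbidden {v : List Letter} (h : IsFactor palPrefix v) :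
    Avoids tauForbidden v :=
  tau.avoids_of_isFactor_image (by decide) (by decide) (isFactor_tau_image ▸ h)

lemma IsFactor.avoids_psiForbidden {v : List Bool} (h : IsFactor (psi.image ∘ palPrefix) v) :
    Avoids psiForbidden v :=
  psi.avoids_of_isFactor_image (by decide) (by decide) h

lemma mem_of_leftSpecial_labelBC {w : List Letter}
    (h : LeftSpecial (IsFactor palPrefix) labelBC w) : w ∈ [[], [a]] :=
  h.mem_of_avoids (F := tauForbidden) (G := []) (fun _ => IsFactor.avoids_tauForbidden) (by decide)
    (by decide) (by simp [Avoids])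

lemma mem_of_leftSpecial_labelA {w : List Letter} (h : LeftSpecial (IsFactor palPrefix) labelA w)
    (hm : ¬ tau.marker <:+: w) : w ∈ [[], [a], [a, a], [a, b], [a, a, b]] :=
  h.mem_of_avoids (F := tauForbidden) (G := [tau.marker])
    (fun _ => IsFactor.avoids_tauForbidden) (by decide) (by decide) (by simpa [Avoids] using hm)

lemma mem_of_leftSpecial_psi {w : List Bool}
    (h : LeftSpecial (IsFactor (psi.image ∘ palPrefix)) some w) (hm : ¬ psi.marker <:+: w) :
    w ∈ [[], [true], [true, true], [true, false], [true, false, true],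
      [true, false, true, true]] :=
  h.mem_of_avoids (F := psiForbidden) (G := [psi.marker])
    (fun _ => IsFactor.avoids_psiForbidden) (by decide) (by decide) (by simpa [Avoids] using hm)

/-! ### Weak words of the ternary word and of its binary image -/

lemma isWeak_labelBC_iff (w : List Letter) :
    IsWeak (BiExt (IsFactor palPrefix) labelBC labelBC w) ↔ w = [a] := by
  constructor
  · intro h
    have := mem_of_leftSpecial_labelBC h.leftSpecial
    fin_cases this
    · obtain ⟨j, hj⟩ := h.exists_right true
      have hA : ¬ BiExt (Avoids tauForbidden) labelBC labelBC [] true j := by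
        clear hj
        revert j
        decide
      exact absurd (hj.imp fun _ => IsFactor.avoids_tauForbidden) hA
    · rfl
  · rintro rfl
    have hA : ∀ i j, BiExt (Avoids tauForbidden) labelBC labelBC [a] i j → (i ^^ j) = true := by
      decide
    have hF : ∀ i j, (i ^^ j) = true → BiExt (· <:+: palPrefix 6) labelBC labelBC [a] i j := by
      decide
    exact ⟨true, fun i j => ⟨fun h => hA i j (h.imp fun _ => IsFactor.avoids_tauForbidden),
      fun h => (hF i j h).imp fun _ hv => ⟨6, hv⟩⟩⟩

lemma not_isWeak_labelBC_labelA (w : List Letter) :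
    ¬ IsWeak (BiExt (IsFactor palPrefix) labelBC labelA w) := by
  intro h
  have := mem_of_leftSpecial_labelBC h.leftSpecial
  fin_cases this
  · obtain ⟨i, hi⟩ := h.exists_left false
    have hA : ¬ BiExt (Avoids tauForbidden) labelBC labelA [] i false := by
      clear hi
      revert i
      decide
    exact hA (hi.imp fun _ => IsFactor.avoids_tauForbidden)
  · have hF : ∀ j, BiExt (· <:+: palPrefix 6) labelBC labelA [a] true j := by decide
    exact not_isWeak_of_forall true (fun j => (hF j).imp fun _ hv => ⟨6, hv⟩) h

lemma not_isWeak_labelA_labelBC (w : List Letter) :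
    ¬ IsWeak (BiExt (IsFactor palPrefix) labelA labelBC w) := fun h =>
  not_isWeak_labelBC_labelA _ (h.biExt_reverse reverse_palPrefix)

lemma IsWeak.tau_marker_infix {w : List Letter}
    (h : IsWeak (BiExt (IsFactor palPrefix) labelA labelA w)) : tau.marker <:+: w := by
  by_contra hm
  have hw := mem_of_leftSpecial_labelA h.leftSpecial hm
  have hw' := mem_of_leftSpecial_labelA (h.biExt_reverse reverse_palPrefix).leftSpecial
    (by rwa [← List.reverse_infix, List.reverse_reverse, tau.marker_reverse])
  have hF : ∀ w ∈ [[], [a], [a, a], [a, b], [a, a, b]],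
      w.reverse ∈ [[], [a], [a, a], [a, b], [a, a, b]] →
      ∃ i, ∀ j, BiExt (· <:+: palPrefix 6) labelA labelA w i j := by decide
  obtain ⟨i, hi⟩ := hF w hw hw'
  exact not_isWeak_of_forall i (fun j => (hi j).imp fun _ hv => ⟨6, hv⟩) h

lemma IsWeak.psi_marker_infix {w : List Bool}
    (h : IsWeak (BiExt (IsFactor (psi.image ∘ palPrefix)) some some w)) : psi.marker <:+: w := by
  by_contra hm
  have hw := mem_of_leftSpecial_psi h.leftSpecial hm
  have hu (n : ℕ) : ((psi.image ∘ palPrefix) n).reverse = (psi.image ∘ palPrefix) n := by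
    rw [Function.comp_apply, ← psi.image_reverse, reverse_palPrefix]
  have hw' := mem_of_leftSpecial_psi (h.biExt_reverse hu).leftSpecial
    (by rwa [← List.reverse_infix, List.reverse_reverse, psi.marker_reverse])
  have hF : ∀ w ∈ [[], [true], [true, true], [true, false], [true, false, true],
      [true, false, true, true]], w.reverse ∈ [[], [true], [true, true], [true, false],
      [true, false, true], [true, false, true, true]] →
      ∃ i, ∀ j, BiExt (· <:+: psi.image (palPrefix 4)) some some w i j := by decide
  obtain ⟨i, hi⟩ := hF w hw hw'
  exact not_isWeak_of_forall i (fun j => (hi j).imp fun _ hv => ⟨4, hv⟩) h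

section Classification

variable {β : Type*} {σ : MarkedSubst Letter β} {p : β → Option Bool} {s : Bool} {c v : List β}

lemma isWeak_iff_of_marker_infix (hnil : σ.LeftContext p s [] labelA)
    (hc : σ.LeftContext p s c labelBC)
    (hl : ∀ l, LeftSpecial (IsFactor (σ.image ∘ palPrefix)) p (l ++ σ.marker).dropLast →
      ¬ σ.marker <:+: (l ++ σ.marker).dropLast → l = [] ∨ l = c)
    (hm : IsWeak (BiExt (IsFactor (σ.image ∘ palPrefix)) p p v) → σ.marker <:+: v) :
    IsWeak (BiExt (IsFactor (σ.image ∘ palPrefix)) p p v) ↔ v = c ++ σ.image [a] ++ c.reverse ∨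
      ∃ w, IsWeak (BiExt (IsFactor palPrefix) labelA labelA w) ∧ v = σ.image w := by
  have image_iff (w) : IsWeak (BiExt (IsFactor (σ.image ∘ palPrefix)) p p (σ.image w)) ↔
      IsWeak (BiExt (IsFactor palPrefix) labelA labelA w) := by
    simpa using MarkedSubst.isWeak_image_iff (u := palPrefix) (w := w) hnil hnil
  constructor
  · intro h
    obtain ⟨l, w, r, rfl, ⟨hl₁, hl₂⟩, hr₁, hr₂⟩ :=
      MarkedSubst.exists_context_decomposition reverse_palPrefix h (hm h)
    rcases hl l hl₁ hl₂ with rfl | rfl <;> rcases hl r hr₁ hr₂ with rfl | rfl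
    · exact .inr ⟨w, by simpa [image_iff] using h, by simp⟩
    · exact (not_isWeak_labelA_labelBC w ((MarkedSubst.isWeak_image_iff hnil hc).1 h)).elim
    · exact (not_isWeak_labelBC_labelA w ((MarkedSubst.isWeak_image_iff hc hnil).1 h)).elim
    · rw [MarkedSubst.isWeak_image_iff hc hc, isWeak_labelBC_iff] at h
      exact .inl (h ▸ rfl)
  · rintro (rfl | ⟨w, hw, rfl⟩)
    · exact (MarkedSubst.isWeak_image_iff hc hc).2 ((isWeak_labelBC_iff _).2 rfl)
    · exact (image_iff w).2 hw

end Classification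

/-- The weak words of the ternary word with respect to `labelA`. -/
def weakCore : ℕ → List Letter
  | 0 => [a] ++ tau.image [a] ++ [a]
  | n + 1 => tau.image (weakCore n)

lemma isWeak_labelA_iff_tau (w : List Letter) :
    IsWeak (BiExt (IsFactor palPrefix) labelA labelA w) ↔ w = weakCore 0 ∨
      ∃ w', IsWeak (BiExt (IsFactor palPrefix) labelA labelA w') ∧ w = tau.image w' := by
  have key := isWeak_iff_of_marker_infix (v := w) tau_leftContext_nil tau_leftContext_a
  rw [isFactor_tau_image] at key
  refine key (fun l h hm => ?_) IsWeak.tau_marker_infix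
  have := mem_of_leftSpecial_labelA h hm
  rw [List.dropLast_append_of_ne_nil tau.marker_ne_nil] at this
  rcases l with _ | ⟨_, _ | ⟨_, _ | ⟨_, l⟩⟩⟩ <;> simp_all [tau]

lemma isWeak_labelA_iff (w : List Letter) :
    IsWeak (BiExt (IsFactor palPrefix) labelA labelA w) ↔ ∃ n, w = weakCore n := by
  constructor
  · induction hk : w.length using Nat.strong_induction_on generalizing w with
    | _ k ih =>
      subst hk
      intro h
      rcases (isWeak_labelA_iff_tau w).1 h with rfl | ⟨w', hw', rfl⟩
      · exact ⟨0, rfl⟩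
      · obtain ⟨n, rfl⟩ := ih _ (tau.length_lt_length_image w') w' rfl hw'
        exact ⟨n + 1, rfl⟩
  · rintro ⟨n, rfl⟩
    induction n with
    | zero => exact (isWeak_labelA_iff_tau _).2 (.inl rfl)
    | succ n ih => exact (isWeak_labelA_iff_tau _).2 (.inr ⟨_, ih, rfl⟩)

lemma isWeak_psi_iff (v : List Bool) :
    IsWeak (BiExt (IsFactor (psi.image ∘ palPrefix)) some some v) ↔
      v = [true, false] ++ psi.image [a] ++ [false, true] ∨ ∃ n, v = psi.image (weakCore n) := by
  rw [isWeak_iff_of_marker_infix psi_leftContext_nil psi_leftContext_true_false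
    (fun l h hm => ?_) IsWeak.psi_marker_infix]
  · simp only [isWeak_labelA_iff]
    refine or_congr Iff.rfl ⟨?_, ?_⟩
    · rintro ⟨_, ⟨n, rfl⟩, rfl⟩
      exact ⟨n, rfl⟩
    · rintro ⟨n, rfl⟩
      exact ⟨_, ⟨n, rfl⟩, rfl⟩
  · have := mem_of_leftSpecial_psi h hm
    rw [List.dropLast_append_of_ne_nil psi.marker_ne_nil] at this
    rcases l with _ | ⟨_, _ | ⟨_, _ | ⟨_, _ | ⟨_, l⟩⟩⟩⟩ <;> simp_all [psi]

/-! ### Structure of the palindromic prefixes -/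

/-- The period-four sequence `0, 1, 1, 0, …`: `kind n` is `true` when `wp n` is an
`E`-palindrome, and `false` when it is a palindrome. -/
def kind : ℕ → Bool
  | 0 => false
  | 1 => true
  | n + 2 => !kind n

lemma kind_eq_true_iff (n : ℕ) : kind n = true ↔ n % 4 = 1 ∨ n % 4 = 2 := by
  induction n using Nat.twoStepInduction with
  | zero => decide
  | one => decide
  | more n ih _ =>
    rw [kind, Bool.not_eq_true', ← Bool.not_eq_true, ih]
    omega

lemma palPrefix_next (n : ℕ) :
    ∃ x, palPrefix n ++ [x] <+: palPrefix (n + 1) ∧ labelA x = some (kind (n + 2)) := by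
  induction n using Nat.twoStepInduction with
  | zero => exact ⟨a, by decide, rfl⟩
  | one => exact ⟨b, by decide, rfl⟩
  | more n ih _ =>
    obtain ⟨x, hx, hlabel⟩ := ih
    obtain ⟨y, hy, hyx⟩ := tau_leftContext_nil.exists_next (i := kind (n + 4))
      (by simp [hlabel, kind]) hx
    exact ⟨y, hyx, hy⟩

lemma psi_image_palPrefix_next (n : ℕ) :
    psi.image (palPrefix n) ++ [kind (n + 2)] <+: psi.image (palPrefix (n + 1)) := by
  obtain ⟨x, hx, hlabel⟩ := palPrefix_next n
  obtain ⟨y, hy, hyx⟩ := psi_leftContext_nil.exists_next (i := kind (n + 2))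
    (by rw [hlabel, Bool.xor_false]) hx
  rwa [Option.some_inj.1 hy] at hyx

lemma tau_image_append_a (u : List Letter) :
    tau.image (u ++ a :: u) = tau.image u ++ c :: tau.image u := by
  simp [MarkedSubst.image, tau]

lemma tau_image_append_c (u : List Letter) :
    tau.image (u ++ c :: u) = tau.image u ++ a :: tau.image u := by
  simp [MarkedSubst.image, tau]

lemma palPrefix_four_mul_add_one (k : ℕ) :
    palPrefix (4 * k + 1) = palPrefix (4 * k) ++ a :: palPrefix (4 * k) := by
  induction k with
  | zero => rfl
  | succ k ih =>
    change tau.image (tau.image (palPrefix (4 * k + 1))) = palPrefix (4 * (k + 1)) ++ _ :: _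
    rw [ih, tau_image_append_a, tau_image_append_c]
    rfl

lemma palPrefix_four_mul_add_three (k : ℕ) :
    palPrefix (4 * k + 3) = palPrefix (4 * k + 2) ++ c :: palPrefix (4 * k + 2) := by
  rw [palPrefix, palPrefix_four_mul_add_one, tau_image_append_a, palPrefix]

lemma length_psi_image_append_a (u : List Letter) :
    (psi.image (u ++ a :: u)).length + 2 = 2 * (psi.image u).length := by
  rw [psi.image_append, psi.image_cons]
  simp [MarkedSubst.image, psi]
  omega

lemma length_psi_image_append_c (u : List Letter) :
    (psi.image (u ++ c :: u)).length = 2 * (psi.image u).length + 3 := by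
  rw [psi.image_append, psi.image_cons]
  simp [MarkedSubst.image, psi]
  omega

lemma palPrefix_even (k : ℕ) : ∃ z, palPrefix (2 * k + 3) = palPrefix (2 * k) ++ z ∧
    palPrefix (2 * k + 4) = palPrefix (2 * k + 3) ++ z := by
  induction k with
  | zero => exact ⟨palPrefix 3, rfl, rfl⟩
  | succ k ih =>
    obtain ⟨z, hz, hz'⟩ := ih
    obtain ⟨z', h⟩ := tau.image_prefix_image (List.prefix_append (palPrefix (2 * k)) z)
    refine ⟨z', ?_, ?_⟩
    · change tau.image (palPrefix (2 * k + 3)) = tau.image (palPrefix (2 * k)) ++ z'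
      rw [hz, h]
    · change tau.image (palPrefix (2 * k + 4)) = tau.image (palPrefix (2 * k + 3)) ++ z'
      rw [hz', tau.image_append_congr h.symm]

lemma length_psi_image_palPrefix_even (k : ℕ) :
    (psi.image (palPrefix (2 * k + 4))).length + (psi.image (palPrefix (2 * k))).length =
      2 * (psi.image (palPrefix (2 * k + 3))).length := by
  obtain ⟨z, hz, hz'⟩ := palPrefix_even k
  obtain ⟨z', h⟩ := psi.image_prefix_image (List.prefix_append (palPrefix (2 * k)) z)
  rw [hz', psi.image_append_congr h.symm, hz, ← h]
  simp only [List.length_append]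
  omega

lemma weakCore_eq (n : ℕ) : ∃ y z, palPrefix (2 * n + 1) = palPrefix (2 * n) ++ z ∧
    palPrefix (2 * n + 3) = palPrefix (2 * n) ++ y ∧
    weakCore n = palPrefix (2 * n + 1) ++ y ++ z := by
  induction n with
  | zero => exact ⟨palPrefix 3, [a], rfl, rfl, rfl⟩
  | succ n ih =>
    obtain ⟨y, z, hz, hy, hw⟩ := ih
    obtain ⟨z', hz'⟩ := tau.image_prefix_image (List.prefix_append (palPrefix (2 * n)) z)
    obtain ⟨y', hy'⟩ := tau.image_prefix_image (List.prefix_append (palPrefix (2 * n)) y)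
    refine ⟨y', z', ?_, ?_, ?_⟩
    · change tau.image (palPrefix (2 * n + 1)) = tau.image (palPrefix (2 * n)) ++ z'
      rw [hz, hz']
    · change tau.image (palPrefix (2 * n + 3)) = tau.image (palPrefix (2 * n)) ++ y'
      rw [hy, hy']
    · change tau.image (weakCore n) = tau.image (palPrefix (2 * n + 1)) ++ y' ++ z'
      rw [hw, tau.image_append_congr hz'.symm, tau.image_append_congr hy'.symm]

lemma psi_image_weakCore (n : ℕ) {y z : List Bool}
    (hz : psi.image (palPrefix (2 * n + 1)) = psi.image (palPrefix (2 * n)) ++ z)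
    (hy : psi.image (palPrefix (2 * n + 3)) = psi.image (palPrefix (2 * n)) ++ y) :
    psi.image (weakCore n) = psi.image (palPrefix (2 * n + 1)) ++ y ++ z := by
  obtain ⟨y', z', hz', hy', hw⟩ := weakCore_eq n
  rw [hz'] at hz
  rw [hy'] at hy
  rw [hw, psi.image_append_congr hz, psi.image_append_congr hy]

lemma reverse_weakCore (n : ℕ) : (weakCore n).reverse = weakCore n := by
  induction n with
  | zero => rfl
  | succ n ih => rw [weakCore, ← tau.image_reverse, ih]

/-! ### Differences of binary words -/

/-- The word of sums modulo two of consecutive letters. -/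
def diff : List Bool → List Bool
  | x :: y :: l => (x ^^ y) :: diff (y :: l)
  | _ => []

/-- The word with first letter `x` and difference `d`. -/
def integ (x : Bool) (d : List Bool) : List Bool := d.scanl xor x

/-- The sum of the letters modulo two. -/
def parity (d : List Bool) : Bool := d.foldr xor false

/-- The antimorphisms `R = theta false` and `E = theta true`. -/
def theta (e : Bool) (w : List Bool) : List Bool := (w.map (e ^^ ·)).reverse

@[simp] lemma diff_nil : diff [] = [] := rfl

@[simp] lemma diff_singleton (x : Bool) : diff [x] = [] := rfl

@[simp] lemma diff_cons_cons (x y : Bool) (l : List Bool) :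
    diff (x :: y :: l) = (x ^^ y) :: diff (y :: l) := rfl

@[simp] lemma integ_nil (x : Bool) : integ x [] = [x] := rfl

@[simp] lemma integ_cons (x e : Bool) (d : List Bool) :
    integ x (e :: d) = x :: integ (x ^^ e) d := by simp [integ]

@[simp] lemma parity_nil : parity [] = false := rfl

@[simp] lemma parity_cons (e : Bool) (d : List Bool) : parity (e :: d) = (e ^^ parity d) := rfl

lemma parity_append (d d' : List Bool) : parity (d ++ d') = (parity d ^^ parity d') := by
  induction d with
  | nil => simp
  | cons e d ih => simp [ih]

lemma integ_append_singleton (x : Bool) (d : List Bool) (e : Bool) :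
    integ x (d ++ [e]) = integ x d ++ [x ^^ parity d ^^ e] := by
  induction d generalizing x with
  | nil => simp
  | cons e' d ih => simp [ih]

lemma length_integ (x : Bool) (d : List Bool) : (integ x d).length = d.length + 1 := by
  simp [integ]

lemma integ_prefix_integ (x : Bool) {d d' : List Bool} (h : d <+: d') :
    integ x d <+: integ x d' := by
  obtain ⟨z, rfl⟩ := h
  induction z using List.reverseRecOn with
  | nil => simp
  | append_singleton z e ih =>
    rw [← List.append_assoc, integ_append_singleton]
    exact ih.trans (List.prefix_append _ _)

@[simp] lemma diff_integ (x : Bool) (d : List Bool) : diff (integ x d) = d := by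
  induction d generalizing x with
  | nil => rfl
  | cons e d ih =>
    have h := ih (x ^^ e)
    rcases d with _ | ⟨e', d⟩
    · simp
    · simp_all

lemma integ_diff (x : Bool) (l : List Bool) : integ x (diff (x :: l)) = x :: l := by
  induction l generalizing x with
  | nil => rfl
  | cons y l ih => simp [ih]

lemma diff_append {v : List Bool} {x : Bool} (hv : v.getLast? = some x) (w : List Bool) :
    diff (v ++ w) = diff v ++ diff (x :: w) := by
  induction v with
  | nil => simp at hv
  | cons y v ih =>
    rcases v with _ | ⟨z, v⟩
    · simp_all
    · simpa using ih (by simpa using hv)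

lemma diff_map_xor (e : Bool) (w : List Bool) : diff (w.map (e ^^ ·)) = diff w := by
  induction w with
  | nil => rfl
  | cons x w ih =>
    rcases w with _ | ⟨y, w⟩
    · rfl
    · rw [List.map_cons, List.map_cons, diff_cons_cons, ← List.map_cons, ih, diff_cons_cons]
      cases e <;> simp

lemma diff_reverse (w : List Bool) : diff w.reverse = (diff w).reverse := by
  induction w with
  | nil => rfl
  | cons x w ih =>
    rcases w with _ | ⟨y, w⟩
    · rfl
    · rw [List.reverse_cons, diff_append (x := y) (by simp), ih]
      simp [Bool.xor_comm]

lemma diff_theta (e : Bool) (w : List Bool) : diff (theta e w) = (diff w).reverse := by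
  rw [theta, diff_reverse, diff_map_xor]

lemma diff_prefix_diff {v w : List Bool} (h : v <+: w) : diff v <+: diff w := by
  obtain ⟨z, rfl⟩ := h
  rcases hv : v.getLast? with _ | x
  · simp [List.getLast?_eq_none_iff.1 hv]
  · exact ⟨_, (diff_append hv z).symm⟩

lemma diff_suffix_diff {v w : List Bool} (h : v <:+ w) : diff v <:+ diff w := by
  rw [← List.reverse_prefix, ← diff_reverse, ← diff_reverse]
  exact diff_prefix_diff (List.reverse_prefix.2 h)

lemma diff_infix_diff {v w : List Bool} (h : v <:+: w) : diff v <:+: diff w := by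
  obtain ⟨t, hvt, htw⟩ := List.infix_iff_prefix_suffix.1 h
  exact (diff_prefix_diff hvt).isInfix.trans (diff_suffix_diff htw).isInfix

lemma exists_map_eq_of_diff_eq {v w : List Bool} (hv : v ≠ []) (hw : w ≠ [])
    (h : diff v = diff w) : ∃ e, v = w.map (e ^^ ·) := by
  obtain ⟨x, v, rfl⟩ := List.exists_cons_of_ne_nil hv
  obtain ⟨y, w, rfl⟩ := List.exists_cons_of_ne_nil hw
  refine ⟨x ^^ y, ?_⟩
  rw [← integ_diff x v, h, ← diff_map_xor (x ^^ y), List.map_cons]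
  simpa using integ_diff x _

lemma exists_infix_diff_eq {d w : List Bool} (hw : w ≠ []) (h : d <:+: diff w) :
    ∃ v, v ≠ [] ∧ v <:+: w ∧ diff v = d := by
  induction w with
  | nil => exact absurd rfl hw
  | cons x w ih =>
    obtain h | h : d <+: diff (x :: w) ∨ (w ≠ [] ∧ d <:+: diff w) := by
      rcases w with _ | ⟨y, w⟩
      · exact .inl (List.infix_nil.1 h ▸ List.nil_prefix)
      · exact (List.infix_cons_iff.1 h).imp_right fun h => ⟨List.cons_ne_nil _ _, h⟩
    · refine ⟨integ x d, by simp [integ], ?_, diff_integ x d⟩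
      exact integ_diff x w ▸ (integ_prefix_integ x h).isInfix
    · obtain ⟨v, hv, hvw, hd⟩ := ih h.1 h.2
      exact ⟨v, hv, hvw.trans (List.suffix_cons x w).isInfix, hd⟩

/-! ### The antimorphisms `R` and `E` -/

section Theta

variable (e e' : Bool) (v w : List Bool)

lemma theta_false : theta false w = w.reverse := by simp [theta]

lemma theta_true : theta true w = Ebar w := by simp [theta, Ebar, Bool.not]

@[simp] lemma length_theta : (theta e w).length = w.length := by simp [theta]

@[simp] lemma theta_append : theta e (v ++ w) = theta e w ++ theta e v := by simp [theta]

@[simp] lemma theta_cons (x : Bool) : theta e (x :: w) = theta e w ++ [e ^^ x] := by simp [theta]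

@[simp] lemma theta_theta : theta e (theta e w) = w := by simp [theta, Function.comp_def]

lemma theta_comm : theta e (theta e' w) = theta e' (theta e w) := by
  simp [theta, Function.comp_def, Bool.xor_left_comm]

variable {e e' v w}

lemma theta_injective : Function.Injective (theta e) :=
  Function.LeftInverse.injective (theta_theta e)

lemma theta_infix_theta (h : v <:+: w) : theta e v <:+: theta e w := by
  obtain ⟨s, t, rfl⟩ := h
  exact ⟨theta e t, theta e s, by simp⟩

lemma eq_of_theta_eq (hw : w ≠ []) (h : theta e w = theta e' w) : e = e' := by
  obtain ⟨x, w, rfl⟩ := List.exists_cons_of_ne_nil hw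
  rw [theta_cons, theta_cons] at h
  exact Bool.xor_left_inj.1 (List.singleton_inj.1 (List.append_inj_right' h rfl))

lemma theta_integ (x : Bool) (d : List Bool) :
    theta e (integ x d) = integ (e ^^ x ^^ parity d) d.reverse := by
  induction d using List.reverseRecOn with
  | nil => simp [theta]
  | append_singleton d y ih =>
    rw [integ_append_singleton, theta_append, ih, List.reverse_append]
    simp [parity_append, theta]

end Theta

/-! ### The prefixes `wp n` -/

/-- The words whose difference sequences are the images of the palindromic prefixes of the ternary
word; `wp_eq_wpInteg` identifies them with the prefixes `wp n`. -/
def wpInteg : ℕ → Word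
  | 0 => []
  | 1 => [true, false]
  | n + 2 => integ true (psi.image (palPrefix n))

lemma parity_psi_image_tau_image (w : List Letter) :
    parity (psi.image (tau.image w)) = !parity (psi.image w) := by
  induction w with
  | nil => rfl
  | cons x w ih =>
    have h : parity (psi.image (tau.block x ++ tau.image w)) =
        (parity (psi.block x) ^^ parity (psi.image (tau.image w))) := by
      rw [psi.image_append, parity_append]
      cases x <;> rfl
    rw [tau.image_cons, h, ih, psi.image_cons, parity_append, Bool.xor_not]

lemma parity_psi_image_palPrefix (n : ℕ) : parity (psi.image (palPrefix n)) = kind (n + 2) := by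
  induction n using Nat.twoStepInduction with
  | zero => rfl
  | one => rfl
  | more n ih _ => rw [palPrefix, parity_psi_image_tau_image, ih, ← kind]

lemma theta_wpInteg (n : ℕ) : theta (kind n) (wpInteg n) = wpInteg n := by
  match n with
  | 0 => rfl
  | 1 => rfl
  | n + 2 =>
    rw [wpInteg, theta_integ, parity_psi_image_palPrefix, ← psi.image_reverse, reverse_palPrefix]
    simp

lemma wpInteg_append_true_prefix_succ (n : ℕ) : wpInteg n ++ [true] <+: wpInteg (n + 1) := by
  match n with
  | 0 => decide
  | 1 => decide
  | n + 2 =>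
    have h := integ_prefix_integ true (psi_image_palPrefix_next n)
    rwa [integ_append_singleton, parity_psi_image_palPrefix, Bool.xor_assoc, Bool.xor_self] at h

lemma wpInteg_prefix {m n : ℕ} (h : m ≤ n) : wpInteg m <+: wpInteg n :=
  Nat.le_induction List.prefix_rfl (fun n _ ih => ih.trans
    ((List.prefix_append _ _).trans (wpInteg_append_true_prefix_succ n))) n h

lemma wpInteg_append_true_prefix {m n : ℕ} (h : m < n) : wpInteg m ++ [true] <+: wpInteg n :=
  (wpInteg_append_true_prefix_succ m).trans (wpInteg_prefix h)

lemma wpInteg_succ_ne_nil (n : ℕ) : wpInteg (n + 1) ≠ [] :=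
  List.ne_nil_of_length_pos (wpInteg_append_true_prefix (m := 0) n.succ_pos).length_le

lemma lt_of_wpInteg_append_prefix {m n : ℕ} {y : Bool} (h : wpInteg m ++ [y] <+: wpInteg n) :
    m < n ∧ y = true := by
  have hmn : m < n := by
    by_contra! hnm
    simpa using h.length_le.trans (wpInteg_prefix hnm).length_le
  refine ⟨hmn, ?_⟩
  have := List.prefix_of_prefix_length_le h (wpInteg_append_true_prefix hmn) (by simp)
  simpa using this

lemma eq_wpInteg_of_prefix {n : ℕ} {q : Word} {e : Bool} (hq : theta e q = q)
    (h : q <+: wpInteg n) : q = [true] ∨ q = [true, false, true] ∨ ∃ m, q = wpInteg m := by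
  rcases q with _ | ⟨x, q⟩
  · exact .inr (.inr ⟨0, rfl⟩)
  replace h : x :: q <+: integ true (psi.image (palPrefix n)) :=
    h.trans (wpInteg_prefix (Nat.le_add_right n 2))
  obtain rfl : x = true := by
    obtain ⟨t, ht⟩ := h
    rcases hd : psi.image (palPrefix n) with _ | ⟨y, d⟩ <;> simp_all
  have hdiff : (diff (true :: q)).reverse = diff (true :: q) := by rw [← diff_theta, hq]
  have hprefix := diff_prefix_diff h
  rw [diff_integ] at hprefix
  rw [← integ_diff true q]
  rcases eq_psi_image_of_prefix hdiff hprefix with h | h | h | ⟨m, h⟩ <;> rw [h]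
  exacts [.inl rfl, .inr (.inr ⟨1, rfl⟩), .inr (.inl rfl), .inr (.inr ⟨m + 2, rfl⟩)]

lemma length_wpInteg_add_two (n : ℕ) :
    (wpInteg (n + 2)).length = (psi.image (palPrefix n)).length + 1 :=
  length_integ _ _

lemma length_wpInteg_four_mul_add_one (k : ℕ) :
    (wpInteg (4 * k + 1)).length = 2 * ((wpInteg (4 * k)).length + 1) := by
  rcases k with _ | k
  · rfl
  · have h₁ := length_wpInteg_add_two (4 * k + 3)
    have h₀ := length_wpInteg_add_two (4 * k + 2)
    rw [palPrefix_four_mul_add_three, length_psi_image_append_c] at h₁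
    rw [show 4 * (k + 1) + 1 = 4 * k + 3 + 2 by ring, h₁, show 4 * (k + 1) = 4 * k + 2 + 2 by ring,
      h₀]
    ring

lemma length_wpInteg_four_mul_add_three (k : ℕ) :
    (wpInteg (4 * k + 3)).length + 5 = 2 * ((wpInteg (4 * k + 2)).length + 1) := by
  have h := length_psi_image_append_a (palPrefix (4 * k))
  rw [← palPrefix_four_mul_add_one] at h
  rw [length_wpInteg_add_two (4 * k + 1), length_wpInteg_add_two (4 * k)]
  omega

lemma length_wpInteg_of_odd (k : ℕ) : (wpInteg (2 * k + 2)).length +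
    ((wpInteg (2 * k + 1 - 3)).length + 2) = 2 * ((wpInteg (2 * k + 1)).length + 1) := by
  match k with
  | 0 => rfl
  | 1 => rfl
  | k + 2 =>
    have h := length_psi_image_palPrefix_even k
    have h₀ := length_wpInteg_add_two (2 * k)
    have h₃ := length_wpInteg_add_two (2 * k + 3)
    have h₄ := length_wpInteg_add_two (2 * k + 4)
    rw [show 2 * (k + 2) + 2 = 2 * k + 4 + 2 by ring, show 2 * (k + 2) + 1 = 2 * k + 3 + 2 by ring,
      show 2 * k + 3 + 2 - 3 = 2 * k + 2 by omega]
    omega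

/-! ### Pseudopalindromic closures -/

lemma exists_centre_of_theta_eq {e : Bool} {w t : Word} (h : theta e (w ++ t) = w ++ t)
    (ht : t.length ≤ w.length) : ∃ z, w = theta e t ++ z ∧ theta e z = z := by
  rw [theta_append] at h
  obtain ⟨z, rfl⟩ := List.prefix_of_prefix_length_le (List.prefix_append _ (theta e w))
    (h ▸ List.prefix_append w t) (by simpa using ht)
  refine ⟨z, rfl, ?_⟩
  simpa using h

/-- A pseudopalindrome extending `w` by at most `w.length` letters has length
`2 * w.length - z.length`, where `z` is the pseudopalindromic suffix of `w` at its centre. -/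
lemma eq_of_theta_eq_of_suffix_bound {e : Bool} {w P U : Word} (hU : theta e U = U) (hwU : w <+: U)
    (hP : theta e P = P) (hwP : w <+: P) (hPU : P.length ≤ U.length)
    (hsuffix : ∀ z, z <:+ w → theta e z = z → U.length + z.length ≤ 2 * w.length) : P = U := by
  obtain ⟨t, rfl⟩ := hwP
  obtain ⟨t', rfl⟩ := hwU
  have hle := hsuffix [] List.nil_suffix rfl
  simp only [List.length_append, List.length_nil] at hPU hle hsuffix
  obtain ⟨z, hz, hzz⟩ := exists_centre_of_theta_eq hP (by omega)
  obtain ⟨z', hz', -⟩ := exists_centre_of_theta_eq hU (by omega)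
  have hlen := hsuffix z ⟨_, hz.symm⟩ hzz
  have htz := congrArg List.length hz
  rw [List.length_append, length_theta] at htz
  rw [theta_injective (List.append_inj_left (hz.symm.trans hz') (by simp; omega))]

lemma wp_succ_spec (n : ℕ) : theta (kind (n + 1)) (wp (n + 1)) = wp (n + 1) ∧
    wp n ++ [true] <+: wp (n + 1) ∧ ∀ v, theta (kind (n + 1)) v = v → wp n ++ [true] <+: v →
      (wp (n + 1)).length ≤ v.length := by
  rcases hk : kind (n + 1)
  · have hn : ¬ ((n + 1) % 4 = 1 ∨ (n + 1) % 4 = 2) := by simp [← kind_eq_true_iff, hk]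
    have hspec := (exists_minLength (pal_ext (wp n ++ [true]))).choose_spec
    simp only [wp, if_neg hn, theta_false]
    exact ⟨hspec.1.2, hspec.1.1, fun v hv hw => hspec.2 v ⟨hw, hv⟩⟩
  · have hspec := (exists_minLength (epal_ext (wp n ++ [true]))).choose_spec
    simp only [wp, if_pos ((kind_eq_true_iff _).1 hk), theta_true]
    exact ⟨hspec.1.2, hspec.1.1, fun v hv hw => hspec.2 v ⟨hw, hv⟩⟩

lemma exists_prefix_of_theta_suffix {e e' : Bool} {w z : Word} (hw : theta e' w = w)
    (hz : z <:+ w ++ [true]) (hzz : theta e z = z) : z = [] ∨ (z = [true] ∧ e = false) ∨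
      ∃ q, theta e q = q ∧ z.length = q.length + 2 ∧ q ++ [e' ^^ !e] <+: w := by
  rcases List.suffix_concat_iff.1 hz with rfl | ⟨z, rfl, hzw⟩
  · exact .inl rfl
  rcases z with _ | ⟨y, q⟩
  · exact .inr (.inl ⟨rfl, by simpa [theta] using hzz⟩)
  · obtain ⟨rfl, h⟩ : (!e) = y ∧ theta e q ++ [e ^^ y] = q ++ [true] := by
      simpa [theta] using hzz
    have hq : theta e q = q := List.append_inj_left' h rfl
    refine .inr (.inr ⟨theta e' q, by rw [theta_comm, hq], by simp, ?_⟩)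
    obtain ⟨s, rfl⟩ := hzw
    exact ⟨theta e' s, by simpa using hw⟩

lemma kind_two_mul_add_one (k : ℕ) : kind (2 * k + 1) = !kind (2 * k) := by
  induction k with
  | zero => rfl
  | succ k ih =>
    change (!kind (2 * k + 1)) = !!kind (2 * k)
    rw [ih]

lemma prefix_of_prefix_wpInteg {n : ℕ} {q : Word} (h : q <+: wpInteg n) (hq : q.length ≤ 4) :
    q <+: [true, false, true, false] :=
  List.prefix_of_prefix_length_le (h.trans (wpInteg_prefix (Nat.le_add_right n 2)))
    (wpInteg_prefix (Nat.le_add_left 2 n)) hq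

lemma theta_suffix_length_le_of_odd (k : ℕ) {z : Word} (hz : z <:+ wpInteg (2 * k + 1) ++ [true])
    (hzz : theta (kind (2 * k + 2)) z = z) : z.length ≤ (wpInteg (2 * k + 1 - 3)).length + 2 := by
  obtain rfl | ⟨rfl, -⟩ | ⟨q, hq, hlen, hnext⟩ :=
    exists_prefix_of_theta_suffix (theta_wpInteg _) hz hzz
  · simp
  · simp
  have hkind : kind (2 * k + 2) = kind (2 * k + 1) := (kind_two_mul_add_one k).symm
  replace hnext : q ++ [true] <+: wpInteg (2 * k + 1) := by simpa [hkind] using hnext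
  rw [hlen]
  obtain rfl | rfl | ⟨m, rfl⟩ := eq_wpInteg_of_prefix hq ((List.prefix_append _ _).trans hnext)
  · exact absurd (prefix_of_prefix_wpInteg hnext (by simp)) (by decide)
  · exact absurd (prefix_of_prefix_wpInteg hnext (by simp)) (by decide)
  have hm := (lt_of_wpInteg_append_prefix hnext).1
  suffices m ≤ 2 * k + 1 - 3 from Nat.add_le_add_right (wpInteg_prefix this).length_le 2
  by_contra! hlt
  obtain ⟨l, rfl⟩ := Nat.exists_eq_add_one_of_ne_zero (Nat.ne_zero_of_lt hlt)
  have hmk : kind (l + 1) = kind (2 * k + 1) :=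
    hkind ▸ eq_of_theta_eq (wpInteg_succ_ne_nil l) ((theta_wpInteg _).trans hq.symm)
  obtain h | h : l + 1 = 2 * k ∨ 2 * k + 1 = l + 1 + 2 := by omega
  · simp [h, kind_two_mul_add_one] at hmk
  · simp [h, kind] at hmk

lemma theta_suffix_of_even (k : ℕ) {z : Word} (hz : z <:+ wpInteg (2 * k) ++ [true])
    (hzz : theta (kind (2 * k + 1)) z = z) :
    z = [] ∨ kind (2 * k + 1) = false ∧ z.length ≤ 5 := by
  obtain rfl | ⟨rfl, h⟩ | ⟨q, hq, hlen, hnext⟩ :=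
    exists_prefix_of_theta_suffix (theta_wpInteg _) hz hzz
  · exact .inl rfl
  · exact .inr ⟨h, by simp⟩
  obtain rfl | rfl | ⟨m, rfl⟩ := eq_wpInteg_of_prefix hq ((List.prefix_append _ _).trans hnext)
  · exact .inr ⟨by simpa [theta] using hq, by simp [hlen]⟩
  · exact .inr ⟨by simpa [theta] using hq, by simp [hlen]⟩
  · have := (lt_of_wpInteg_append_prefix hnext).2
    simp [kind_two_mul_add_one] at this

lemma theta_suffix_bound (n : ℕ) {z : Word} (hz : z <:+ wpInteg n ++ [true])
    (hzz : theta (kind (n + 1)) z = z) :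
    (wpInteg (n + 1)).length + z.length ≤ 2 * ((wpInteg n).length + 1) := by
  obtain ⟨k, rfl | rfl⟩ := n.even_or_odd'
  · have hz := theta_suffix_of_even k hz hzz
    obtain ⟨l, rfl | rfl⟩ := k.even_or_odd'
    · rw [← mul_assoc] at hz ⊢
      have hkind : kind (4 * l + 1) = true := (kind_eq_true_iff _).2 (by omega)
      obtain rfl | h := hz
      · exact (length_wpInteg_four_mul_add_one l).le
      · simp [hkind] at h
    · have hlen : z.length ≤ 5 := by
        obtain rfl | h := hz
        exacts [by simp, h.2]
      have := length_wpInteg_four_mul_add_three l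
      rw [show 2 * (2 * l + 1) = 4 * l + 2 by ring, show 4 * l + 2 + 1 = 4 * l + 3 from rfl]
      omega
  · have := theta_suffix_length_le_of_odd k hz hzz
    have := length_wpInteg_of_odd k
    rw [show 2 * k + 1 + 1 = 2 * k + 2 from rfl]
    omega

theorem wp_eq_wpInteg (n : ℕ) : wp n = wpInteg n := by
  induction n with
  | zero => rfl
  | succ n ih =>
    obtain ⟨hP, hwP, hmin⟩ := wp_succ_spec n
    rw [ih] at hwP hmin
    have hwU := wpInteg_append_true_prefix_succ n
    refine eq_of_theta_eq_of_suffix_bound (theta_wpInteg _) hwU hP hwP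
      (hmin _ (theta_wpInteg _) hwU) fun z hz hzz => ?_
    simpa using theta_suffix_bound n hz hzz

/-! ### Factors of `u_p` -/

lemma factorUp_iff {v : Word} : FactorUp v ↔ ∃ n, v <:+: wpInteg n := by
  simp only [FactorUp, wp_eq_wpInteg]

lemma exists_le_kind_eq (n : ℕ) (e : Bool) : ∃ m, n ≤ m ∧ kind m = e := by
  by_cases h : kind n = e
  · exact ⟨n, le_rfl, h⟩
  · exact ⟨n + 2, by omega, by cases e <;> simpa [kind] using h⟩

lemma factorUp_theta {v : Word} (h : FactorUp v) (e : Bool) : FactorUp (theta e v) := by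
  obtain ⟨n, hn⟩ := factorUp_iff.1 h
  obtain ⟨m, hnm, rfl⟩ := exists_le_kind_eq n e
  exact factorUp_iff.2
    ⟨m, theta_wpInteg m ▸ theta_infix_theta (hn.trans (wpInteg_prefix hnm).isInfix)⟩

lemma factorUp_map_xor {v : Word} (h : FactorUp v) (e : Bool) : FactorUp (v.map (e ^^ ·)) := by
  simpa [theta] using factorUp_theta (factorUp_theta h false) e

lemma factorUp_iff_isFactor_diff {v : Word} (hv : v ≠ []) :
    FactorUp v ↔ IsFactor (psi.image ∘ palPrefix) (diff v) := by
  rw [factorUp_iff]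
  constructor
  · rintro ⟨n, hn⟩
    have h := diff_infix_diff (hn.trans (wpInteg_prefix (Nat.le_add_right n 2)).isInfix)
    exact ⟨n, by rwa [wpInteg, diff_integ] at h⟩
  · rintro ⟨n, hn⟩
    obtain ⟨w, hw, hwn, hd⟩ := exists_infix_diff_eq (d := diff v) (w := wpInteg (n + 2))
      (wpInteg_succ_ne_nil _) (by rwa [wpInteg, diff_integ])
    obtain ⟨e, rfl⟩ := exists_map_eq_of_diff_eq hv hw hd.symm
    exact factorUp_iff.1 (factorUp_map_xor (factorUp_iff.2 ⟨n + 2, hwn⟩) e)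

lemma weakBSUp_iff_isWeak (v : Word) :
    WeakBSUp v ↔ IsWeak fun i j => FactorUp (i :: v ++ [j]) := by
  constructor
  · rintro ⟨-, ⟨h₁, h₂, h₃, h₄⟩ | ⟨h₁, h₂, h₃, h₄⟩⟩
    · exact ⟨true, by rintro (_ | _) (_ | _) <;> simpa⟩
    · exact ⟨false, by rintro (_ | _) (_ | _) <;> simpa⟩
  · refine fun h => ⟨⟨fun i => ?_, fun j => ?_⟩, ?_⟩
    · obtain ⟨j, n, hn⟩ := h.exists_right i
      exact ⟨n, (List.prefix_append _ [j]).isInfix.trans hn⟩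
    · obtain ⟨i, n, hn⟩ := h.exists_left j
      exact ⟨n, (List.suffix_cons i _).isInfix.trans hn⟩
    · obtain ⟨s, hs⟩ := h
      cases s <;> simp_all

lemma not_weakBSUp_nil : ¬ WeakBSUp [] := by
  rw [weakBSUp_iff_isWeak]
  refine not_isWeak_of_forall true fun j => (factorUp_iff_isFactor_diff (by simp)).2 ⟨3, ?_⟩
  revert j
  decide

lemma weakBSUp_iff_isWeak_diff {v : Word} (hv : v ≠ []) :
    WeakBSUp v ↔ IsWeak (BiExt (IsFactor (psi.image ∘ palPrefix)) some some (diff v)) := by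
  obtain ⟨x, t, rfl⟩ := List.exists_cons_of_ne_nil hv
  obtain ⟨z, hz⟩ := Option.ne_none_iff_exists'.1 (mt List.getLast?_eq_none_iff.1 hv)
  rw [weakBSUp_iff_isWeak]
  refine isWeak_congr_xor x z fun i j => ?_
  have h : diff (i :: (x :: t) ++ [j]) = (i ^^ x) :: diff (x :: t) ++ [j ^^ z] := by
    rw [List.cons_append, List.cons_append, diff_cons_cons, ← List.cons_append, diff_append hz]
    simp [Bool.xor_comm]
  rw [factorUp_iff_isFactor_diff (by simp), h]
  simp [BiExt]

/-! ### The words `s_{2k+1}` -/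

lemma getLast?_wpInteg_succ (n : ℕ) : (wpInteg (n + 1)).getLast? = some (!kind (n + 1)) := by
  obtain ⟨t, ht⟩ : [true] <+: wpInteg (n + 1) := wpInteg_append_true_prefix (m := 0) n.succ_pos
  rw [← theta_wpInteg, ← ht]
  simp

lemma sOdd_add_two (n : ℕ) : sOdd (n + 2) = theta (kind (2 * n)) (wpInteg (2 * n + 1)) ++
    (wpInteg (2 * n + 3)).drop (wpInteg (2 * n)).length ++
      (wpInteg (2 * n + 1)).drop (wpInteg (2 * n)).length := by
  obtain ⟨k, rfl | rfl⟩ := n.even_or_odd'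
  · have hkind : kind (2 * (2 * k)) = false := by
      rw [← Bool.not_eq_true, kind_eq_true_iff]
      omega
    rw [sOdd, if_pos (by omega), s1, hkind, theta_false, show (2 * k + 2) / 2 = k + 1 by omega,
      show 4 * (k + 1) - 3 = 2 * (2 * k) + 1 by omega,
      show 4 * (k + 1) - 1 = 2 * (2 * k) + 3 by omega,
      show 4 * (k + 1) - 4 = 2 * (2 * k) by omega]
    simp only [wp_eq_wpInteg]
  · have hkind : kind (2 * (2 * k + 1)) = true := (kind_eq_true_iff _).2 (by omega)
    rw [sOdd, if_neg (by omega), s3, hkind, theta_true,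
      show (2 * k + 1 + 2) / 2 = k + 1 by omega,
      show 4 * (k + 1) - 1 = 2 * (2 * k + 1) + 1 by omega,
      show 4 * (k + 1) + 1 = 2 * (2 * k + 1) + 3 by omega,
      show 4 * (k + 1) - 2 = 2 * (2 * k + 1) by omega]
    simp only [wp_eq_wpInteg]

lemma diff_sOdd_two : diff (sOdd 2) = [true, false] ++ psi.image [a] ++ [false, true] := by
  rw [sOdd_add_two 0]
  decide

lemma diff_sOdd_add_three (n : ℕ) : diff (sOdd (n + 3)) = psi.image (weakCore n) := by
  obtain ⟨z, hz⟩ := wpInteg_prefix (show 2 * n + 2 ≤ 2 * n + 3 by omega)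
  obtain ⟨y, hy⟩ := wpInteg_prefix (show 2 * n + 2 ≤ 2 * n + 5 by omega)
  have hlast := getLast?_wpInteg_succ (2 * n + 1)
  have hlast' : (wpInteg (2 * n + 2) ++ y).getLast? = some (!kind (2 * n + 2)) := by
    rw [hy, getLast?_wpInteg_succ, show kind (2 * n + 4 + 1) = !kind (2 * n + 3) from rfl,
      show 2 * n + 3 = 2 * (n + 1) + 1 from rfl, kind_two_mul_add_one]
    simp [mul_add]
  have hs : sOdd (n + 3) = theta (kind (2 * n + 2)) (wpInteg (2 * n + 3)) ++ y ++ z := by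
    rw [show n + 3 = n + 1 + 2 from rfl, sOdd_add_two]
    simp [mul_add, ← hz, ← hy]
  have htheta : theta (kind (2 * n + 2)) (wpInteg (2 * n + 3)) =
      theta (kind (2 * n + 2)) z ++ wpInteg (2 * n + 2) := by
    rw [← hz, theta_append, theta_wpInteg]
  have hdz := diff_append hlast z
  have hdy := diff_append hlast y
  rw [hz, wpInteg, wpInteg, diff_integ, diff_integ] at hdz
  rw [hy, wpInteg, wpInteg, diff_integ, diff_integ] at hdy
  rw [psi_image_weakCore n hdz hdy, hs, diff_append (x := !kind (2 * n + 2)),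
    diff_append (x := !kind (2 * n + 2)), diff_theta, wpInteg, diff_integ, ← psi.image_reverse,
    reverse_palPrefix]
  · rw [htheta, List.getLast?_append, hlast, Option.some_or]
  · rw [htheta, List.append_assoc, List.getLast?_append, hlast', Option.some_or]

lemma reverse_diff_sOdd_add_two (n : ℕ) :
    (diff (sOdd (n + 2))).reverse = diff (sOdd (n + 2)) := by
  rcases n with _ | n
  · rw [diff_sOdd_two]
    decide
  · rw [diff_sOdd_add_three, ← psi.image_reverse, reverse_weakCore]

lemma diff_eq_diff_iff {v s : Word} (hs : s ≠ []) (hrev : (diff s).reverse = diff s) :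
    (v ≠ [] ∧ diff v = diff s) ↔
      v = s ∨ v = s.reverse ∨ v = Ebar s ∨ v = Ebar s.reverse := by
  rw [← theta_true, ← theta_true, ← theta_false]
  have hne (e : Bool) {w : Word} (hw : w ≠ []) : theta e w ≠ [] := by simpa [theta] using hw
  constructor
  · rintro ⟨hv, h⟩
    obtain ⟨_ | _, rfl⟩ := exists_map_eq_of_diff_eq hv hs h
    · simp
    · exact .inr (.inr (.inr (by simp [theta])))
  · rintro (rfl | rfl | rfl | rfl)
    · exact ⟨hs, rfl⟩
    · exact ⟨hne _ hs, by rw [diff_theta, hrev]⟩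
    · exact ⟨hne _ hs, by rw [diff_theta, hrev]⟩
    · exact ⟨hne _ (hne _ hs), by rw [diff_theta, diff_theta, hrev, hrev]⟩

lemma sOdd_add_two_ne_nil (n : ℕ) : sOdd (n + 2) ≠ [] := by
  rw [sOdd_add_two]
  simp [theta, wpInteg_succ_ne_nil]

lemma weakBSUp_iff_exists_diff_eq (v : Word) :
    WeakBSUp v ↔ ∃ n, v ≠ [] ∧ diff v = diff (sOdd (n + 2)) := by
  rw [exists_and_left]
  rcases eq_or_ne v [] with rfl | hv
  · simp [not_weakBSUp_nil]
  · rw [weakBSUp_iff_isWeak_diff hv, isWeak_psi_iff, and_iff_right hv, ← diff_sOdd_two]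
    simp only [← diff_sOdd_add_three]
    exact Nat.or_exists_add_one (p := fun n => diff v = diff (sOdd (n + 2)))

end PseudostandardWord

/-- the weak bispecial factors of `u_p` are exactly the factors
`s_{2k+1}` (`k ≥ 2`) together with their images under `R` and `E`. -/
theorem weak_bispecials_characterization (v : Word) :
    WeakBSUp v ↔ ∃ k : ℕ, 2 ≤ k ∧
      (v = sOdd k ∨ v = (sOdd k).reverse ∨ v = Ebar (sOdd k) ∨
        v = Ebar ((sOdd k).reverse)) := by
  rw [PseudostandardWord.weakBSUp_iff_exists_diff_eq]
  simp only [fun n => PseudostandardWord.diff_eq_diff_iff (v := v)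
    (PseudostandardWord.sOdd_add_two_ne_nil n) (PseudostandardWord.reverse_diff_sOdd_add_two n)]
  constructor
  · rintro ⟨n, hn⟩
    exact ⟨n + 2, Nat.le_add_left 2 n, hn⟩
  · rintro ⟨k, hk, hv⟩
    obtain ⟨n, rfl⟩ := Nat.exists_eq_add_of_le' hk
    exact ⟨n, hv⟩
end

section
/- For u_p = u(1^ω,(EERR)^ω) and k ≥ 2, the lengths satisfy |s_{2k+1}| < |w_{2k+1}| < |s_{2k+3}|. -/
/-!
When the antimorphisms fixing `w_m` and `w_n` with `m < n` differ, `|w_{n+1}| > |w_m| + |w_n|`: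
otherwise reflecting a letter in `w_m`, `w_n` and `w_{n+1}` in turn, and reflecting it in `w_{n+1}`
alone, both give the letter `1` that extends `w_m` and `w_n`, although the reflections in `w_m` and
`w_n` together complement it. For even `m` this applies to `w_m` paired with each of `w_{m+1}` and
`w_{m+2}`, so that `|w_{m+3}| > 2|w_m| + |w_{m+1}|`. For `m = 2k - 2` the right-hand side exceeds
`|s_{2k+1}|`, while `|s_{2k+3}| > |w_{2k+1}|` follows from `|w_{2k-2}| < |w_{2k-1}|`.
-/

/-- Invariance of `w` under the antimorphism that reverses a word and applies `σ` to each letter.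
Palindromes are the case `σ = id`, and `E`-palindromes the case `σ = Bool.not`. -/
def IsPseudopal {α : Type*} (σ : α → α) (w : List α) : Prop := (w.map σ).reverse = w

namespace IsPseudopal

variable {α : Type*} {σ τ ρ : α → α} {x y z : List α} {a : α}

lemma map_getElem (hx : IsPseudopal σ x) {i j : ℕ} (hj : j < x.length)
    (hij : i + j + 1 = x.length) : σ x[j] = x[i] := by
  have hi : i < ((x.map σ).reverse).length := by
    simp only [List.length_reverse, List.length_map]; omega
  calc σ x[j] = ((x.map σ).reverse)[i] := by
        simp only [List.getElem_reverse, List.getElem_map, List.length_map]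
        congr 2; omega
    _ = x[i] := List.getElem_of_eq hx hi

lemma length_add_length_lt (hρ : ρ.Injective) (hx : IsPseudopal σ x) (hy : IsPseudopal τ y)
    (hz : IsPseudopal ρ z) (hxy : x ++ [a] <+: y) (hyz : y ++ [a] <+: z)
    (hστ : ∀ c ∈ x, τ (σ c) ≠ c) : x.length + y.length < z.length := by
  by_contra! hle
  have y_lt_z : y.length < z.length := by simpa using hyz.length_le
  have x_lt_y : x.length < y.length := by simpa using hxy.length_le
  have x_prefix_y : x <+: y := (List.prefix_append x [a]).trans hxy
  have y_prefix_z : y <+: z := (List.prefix_append y [a]).trans hyz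
  obtain ⟨p, hp⟩ : ∃ p, p + y.length + 1 = z.length := ⟨z.length - y.length - 1, by omega⟩
  obtain ⟨q, hq⟩ : ∃ q, q + p + 1 = x.length := ⟨x.length - p - 1, by omega⟩
  obtain ⟨r, hr⟩ : ∃ r, r + q + 1 = y.length := ⟨y.length - q - 1, by omega⟩
  have reflect_z : ρ x[p] = a := by
    calc ρ x[p] = ρ z[p] := by rw [(x_prefix_y.trans y_prefix_z).getElem]
      _ = z[y.length] := hz.map_getElem _ (by omega)
      _ = a := by simp [← hyz.getElem]
  have reflect_xyz : ρ (τ (σ x[p])) = a := by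
    calc ρ (τ (σ x[p])) = ρ (τ y[q]) := by
          rw [hx.map_getElem _ hq, x_prefix_y.getElem]
      _ = ρ z[r] := by rw [hy.map_getElem _ hr, y_prefix_z.getElem]
      _ = z[x.length] := hz.map_getElem _ (by omega)
      _ = a := by simp [← y_prefix_z.getElem x_lt_y, ← hxy.getElem]
  exact hστ x[p] (List.getElem_mem _) (hρ (reflect_xyz.trans reflect_z.symm))

end IsPseudopal

lemma prefix_palCl (w : Word) : w <+: palCl w := (exists_minLength (pal_ext w)).choose_spec.1.1

lemma isPal_palCl (w : Word) : IsPal (palCl w) := (exists_minLength (pal_ext w)).choose_spec.1.2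

lemma prefix_epalCl (w : Word) : w <+: epalCl w := (exists_minLength (epal_ext w)).choose_spec.1.1

lemma isEPal_epalCl (w : Word) : IsEPal (epalCl w) :=
  (exists_minLength (epal_ext w)).choose_spec.1.2

/-- The letter map of the antimorphism fixing `wp n`: `Bool.not` where the directive sequence
`(EERR)^ω`, indexed from `1`, has `E`, and `id` where it has `R`; the empty word `wp 0` is
given `id`. -/
def wpLetterMap (n : ℕ) : Bool → Bool := if n % 4 = 1 ∨ n % 4 = 2 then Bool.not else id

lemma wpLetterMap_injective (n : ℕ) : (wpLetterMap n).Injective := by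
  unfold wpLetterMap
  split_ifs
  exacts [Bool.not_injective, Function.injective_id]

lemma wpLetterMap_comp_ne {m n : ℕ} (h : wpLetterMap m ≠ wpLetterMap n) (c : Bool) :
    wpLetterMap n (wpLetterMap m c) ≠ c := by
  unfold wpLetterMap at *
  split_ifs at * <;> simp_all

lemma wpLetterMap_ne {m n : ℕ} (h : ¬(m % 4 = 1 ∨ m % 4 = 2 ↔ n % 4 = 1 ∨ n % 4 = 2)) :
    wpLetterMap m ≠ wpLetterMap n := by
  have not_ne_id : Bool.not ≠ id := fun hid => Bool.not_ne_self true (congrFun hid true)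
  unfold wpLetterMap
  split_ifs
  exacts [absurd (by tauto) h, not_ne_id, not_ne_id.symm, absurd (by tauto) h]

lemma wpLetterMap_ne_add_one {n : ℕ} (hn : Even n) : wpLetterMap n ≠ wpLetterMap (n + 1) := by
  have := Nat.even_iff.mp hn
  exact wpLetterMap_ne (by omega)

lemma wpLetterMap_ne_add_two (n : ℕ) : wpLetterMap n ≠ wpLetterMap (n + 2) :=
  wpLetterMap_ne (by omega)

lemma isPseudopal_wp (n : ℕ) : IsPseudopal (wpLetterMap n) (wp n) := by
  cases n with
  | zero => simp [IsPseudopal, wp]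
  | succ n =>
    rw [wp, wpLetterMap]
    split_ifs
    · exact isEPal_epalCl _
    · simpa only [IsPseudopal, IsPal, List.map_id] using isPal_palCl (wp n ++ [true])

lemma wp_append_prefix_wp_succ (n : ℕ) : wp n ++ [true] <+: wp (n + 1) := by
  rw [wp]
  split_ifs
  exacts [prefix_epalCl _, prefix_palCl _]

lemma wp_append_prefix_wp {m n : ℕ} (hmn : m < n) : wp m ++ [true] <+: wp n := by
  induction n, hmn using Nat.le_induction with
  | base => exact wp_append_prefix_wp_succ m
  | succ n _ ih => exact ih.trans ((List.prefix_append _ _).trans (wp_append_prefix_wp_succ n))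

lemma wp_length_lt {m n : ℕ} (hmn : m < n) : (wp m).length < (wp n).length := by
  simpa using (wp_append_prefix_wp hmn).length_le

lemma wp_length_add_lt {m n : ℕ} (hmn : m < n) (h : wpLetterMap m ≠ wpLetterMap n) :
    (wp m).length + (wp n).length < (wp (n + 1)).length :=
  (isPseudopal_wp m).length_add_length_lt (wpLetterMap_injective (n + 1)) (isPseudopal_wp n)
    (isPseudopal_wp (n + 1)) (wp_append_prefix_wp hmn) (wp_append_prefix_wp_succ n)
    fun c _ => wpLetterMap_comp_ne h c

lemma two_mul_wp_length_add_lt {m : ℕ} (hm : Even m) :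
    2 * (wp m).length + (wp (m + 1)).length < (wp (m + 3)).length := by
  calc 2 * (wp m).length + (wp (m + 1)).length
      = (wp m).length + ((wp m).length + (wp (m + 1)).length) := by ring
    _ < (wp m).length + (wp (m + 2)).length := by
        gcongr; exact wp_length_add_lt (by omega) (wpLetterMap_ne_add_one hm)
    _ < (wp (m + 3)).length := wp_length_add_lt (by omega) (wpLetterMap_ne_add_two m)

lemma s1_succ_length (k : ℕ) :
    (s1 (k + 1)).length + 2 * (wp (4 * k)).length =
      2 * (wp (4 * k + 1)).length + (wp (4 * k + 3)).length := by
  have h₁ : (wp (4 * k)).length < (wp (4 * k + 1)).length := wp_length_lt (by omega)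
  have h₃ : (wp (4 * k)).length < (wp (4 * k + 3)).length := wp_length_lt (by omega)
  simp only [s1, show 4 * (k + 1) - 4 = 4 * k by omega, show 4 * (k + 1) - 3 = 4 * k + 1 by omega,
    show 4 * (k + 1) - 1 = 4 * k + 3 by omega, List.length_append, List.length_reverse,
    List.length_drop]
  omega

lemma s3_succ_length (k : ℕ) :
    (s3 (k + 1)).length + 2 * (wp (4 * k + 2)).length =
      2 * (wp (4 * k + 3)).length + (wp (4 * k + 5)).length := by
  have h₃ : (wp (4 * k + 2)).length < (wp (4 * k + 3)).length := wp_length_lt (by omega)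
  have h₅ : (wp (4 * k + 2)).length < (wp (4 * k + 5)).length := wp_length_lt (by omega)
  simp only [s3, Ebar, show 4 * (k + 1) - 2 = 4 * k + 2 by omega,
    show 4 * (k + 1) - 1 = 4 * k + 3 by omega, show 4 * (k + 1) + 1 = 4 * k + 5 by omega,
    List.length_append, List.length_reverse, List.length_map, List.length_drop]
  omega

lemma sOdd_add_two_length (k : ℕ) :
    (sOdd (k + 2)).length + 2 * (wp (2 * k)).length =
      2 * (wp (2 * k + 1)).length + (wp (2 * k + 3)).length := by
  obtain ⟨j, rfl | rfl⟩ := Nat.even_or_odd' k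
  · rw [sOdd, if_pos (by omega), show (2 * j + 2) / 2 = j + 1 by omega,
      show 2 * (2 * j) = 4 * j by ring]
    exact s1_succ_length j
  · rw [sOdd, if_neg (by omega), show (2 * j + 1 + 2) / 2 = j + 1 by omega,
      show 2 * (2 * j + 1) = 4 * j + 2 by ring]
    exact s3_succ_length j

/-- for `k ≥ 2`, `|s_{2k+1}| < |w_{2k+1}| < |s_{2k+3}|`. -/
theorem length_interlacing (k : ℕ) (hk : 2 ≤ k) :
    (sOdd k).length < (wp (2*k+1)).length ∧
      (wp (2*k+1)).length < (sOdd (k+1)).length := by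
  obtain ⟨j, rfl⟩ := Nat.exists_eq_add_of_le' hk
  have s_lower : (sOdd (j + 2)).length + 2 * (wp (2 * j)).length =
      2 * (wp (2 * j + 1)).length + (wp (2 * j + 3)).length := sOdd_add_two_length j
  have s_upper : (sOdd (j + 3)).length + 2 * (wp (2 * j + 2)).length =
      2 * (wp (2 * j + 3)).length + (wp (2 * j + 5)).length := sOdd_add_two_length (j + 1)
  have w_growth : 2 * (wp (2 * j + 2)).length + (wp (2 * j + 3)).length <
      (wp (2 * j + 5)).length := two_mul_wp_length_add_lt (by simp [parity_simps])
  have w_one_lt_two : (wp (2 * j + 1)).length < (wp (2 * j + 2)).length := wp_length_lt (by omega)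
  have w_two_lt_three : (wp (2 * j + 2)).length < (wp (2 * j + 3)).length :=
    wp_length_lt (by omega)
  change (sOdd (j + 2)).length < (wp (2 * j + 5)).length ∧
    (wp (2 * j + 5)).length < (sOdd (j + 3)).length
  constructor <;> omega
end
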